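/- arXiv:2205.12166 — 5 statements merged into one kernel-verified Lean document; each statement's English description precedes it below -/
import Mathlib

section
/- For every coupling constant λ ≥ 0 and all source matrices J, K ∈ M_N(ℂ), the function Φ ↦ exp(−N·S(Φ) + N·(Σ_{m,n} J_{nm}·conj(Φ_{nm}) + Σ_{m,n} K_{mn}·Φ_{nm})) is absolutely integrable on M_N(ℂ) with respect to Lebesgue measure; consequently the LSZ partition function Z(J,K) is well defined, Z is an analytic function of the 2N² complex entries of (J,K), and Z(0,0) is a strictly positive real number. -/
/-!
The quartic term of the action is `λ/2` times a sum of squared moduli (the trace of the square of the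
Hermitian matrix `Φ*Φ`), hence nonnegative, so `|exp(-N S(Φ))|` is at most the product over the
matrix entries of the Gaussians `exp(-N (E_n + Ẽ_m)|Φ_{nm}|²)`. At fixed `Φ` the source term is a
continuous linear functional `L_Φ` of `(J, K)` with `‖L_Φ‖ ≤ 2N Σ |Φ_{nm}|`; the product of Gaussians
absorbs `exp(r‖L_Φ‖)` for every `r` (`integrable_weight_mul_exp_source`), which gives absolute
integrability.

Thus `Z(J,K) = ∫ exp(-N S(Φ)) exp(L_Φ(J,K)) dΦ` is a Laplace-type integral whose weight beats every
exponential of `‖L_Φ‖`. Expanding `exp(L_Φ(J,K))` and integrating termwise yields a power series in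
`(J,K)` with infinite radius of convergence (`analyticOnNhd_integral_mul_exp`), so `Z` is entire.
Finally `Z(0,0)` is the integral of the real exponential of `-N S`, which is positive everywhere.
-/

open MeasureTheory Matrix

/-- The LSZ action `S(Φ) = Σ_{m,n} (E_n + Ẽ_m)|Φ_{nm}|² + (λ/2)·Tr((Φ*Φ)²)`,
viewed as a complex number. -/
noncomputable def lszAction (N : ℕ) (E Et : Fin N → ℝ) (lam : ℝ)
    (Φ : Fin N → Fin N → ℂ) : ℂ :=
  (∑ n, ∑ m, (((E n + Et m : ℝ)) : ℂ) * ((Complex.normSq (Φ n m) : ℝ) : ℂ))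
    + ((lam / 2 : ℝ) : ℂ) *
      ((((Matrix.of Φ)ᴴ * Matrix.of Φ) * ((Matrix.of Φ)ᴴ * Matrix.of Φ)).trace)

/-- The integrand of the LSZ partition function with sources `J`, `K`. -/
noncomputable def lszIntegrand (N : ℕ) (E Et : Fin N → ℝ) (lam : ℝ)
    (J K : Fin N → Fin N → ℂ) (Φ : Fin N → Fin N → ℂ) : ℂ :=
  Complex.exp (-(N : ℂ) * lszAction N E Et lam Φ
    + (N : ℂ) * ((∑ m, ∑ n, J n m * (starRingEnd ℂ) (Φ n m))
      + ∑ m, ∑ n, K m n * Φ n m))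

/-- The LSZ partition function `Z(J,K)`, an integral over the space of complex
`N×N` matrices with respect to Lebesgue measure. -/
noncomputable def lszZ (N : ℕ) (E Et : Fin N → ℝ) (lam : ℝ)
    (J K : Fin N → Fin N → ℂ) : ℂ :=
  ∫ Φ : Fin N → Fin N → ℂ, lszIntegrand N E Et lam J K Φ

/-- The Laplace-type integral `x ↦ ∫ f(v) exp(L_v x) dμ(v)` is entire as soon as `f` decays faster
than every `exp(-r‖L_v‖)`. Its power series at the origin is obtained by integrating the exponential
series termwise, and `(r‖L_v‖)ⁿ / n! ≤ exp(r‖L_v‖)` shows that the radius of convergence is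
infinite. -/
theorem analyticOnNhd_integral_mul_exp {V X : Type*} [MeasurableSpace V] {μ : Measure V}
    [NormedAddCommGroup X] [NormedSpace ℂ X] {f : V → ℂ} {L : V → X →L[ℂ] ℂ}
    (hf : AEStronglyMeasurable f μ) (hL : AEStronglyMeasurable L μ)
    (h : ∀ r : ℝ, Integrable (fun v => ‖f v‖ * Real.exp (r * ‖L v‖)) μ) :
    AnalyticOnNhd ℂ (fun x => ∫ v, f v * Complex.exp (L v x) ∂μ) Set.univ := by
  let c (n : ℕ) (v : V) : ContinuousMultilinearMap ℂ (fun _ : Fin n => X) ℂ :=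
    f v • (NormedSpace.expSeries ℂ ℂ).compContinuousLinearMap (L v) n
  have hc_norm (n : ℕ) (v : V) : ‖c n v‖ ≤ ‖f v‖ * (‖L v‖ ^ n / n.factorial) := by
    simp only [c, norm_smul]
    gcongr
    refine (FormalMultilinearSeries.norm_compContinuousLinearMap_le _ _ _).trans ?_
    simp [NormedSpace.expSeries, norm_smul, div_eq_inv_mul]
  have hc_meas (n : ℕ) : AEStronglyMeasurable (c n) μ := by
    refine hf.smul ?_
    have hcont : Continuous fun u : X →L[ℂ] ℂ =>
        (NormedSpace.expSeries ℂ ℂ).compContinuousLinearMap u n := by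
      have h1 := (ContinuousMultilinearMap.compContinuousLinearMapContinuousMultilinear ℂ
        (fun _ : Fin n => X) (fun _ : Fin n => ℂ) ℂ).cont
      have h2 : Continuous fun u : X →L[ℂ] ℂ => (fun _ : Fin n => u) := by fun_prop
      exact (h1.comp h2).clm_apply continuous_const
    exact hcont.comp_aestronglyMeasurable hL
  have hc_exp (r : ℝ) (hr : 0 ≤ r) (n : ℕ) (v : V) :
      ‖c n v‖ * r ^ n ≤ ‖f v‖ * Real.exp (r * ‖L v‖) := by
    calc ‖c n v‖ * r ^ n ≤ ‖f v‖ * (‖L v‖ ^ n / n.factorial) * r ^ n := by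
          gcongr; exact hc_norm n v
      _ = ‖f v‖ * ((r * ‖L v‖) ^ n / n.factorial) := by rw [mul_pow]; ring
      _ ≤ _ := by
          gcongr
          exact Real.pow_div_factorial_le_exp _ (by positivity) n
  have hc_int (n : ℕ) : Integrable (c n) μ :=
    (h 1).mono' (hc_meas n) (.of_forall fun v => by simpa using hc_exp 1 zero_le_one n v)
  have hc_apply (n : ℕ) (v : V) (y : X) :
      (c n v fun _ => y) = f v * ((L v y) ^ n / n.factorial) := by
    change f v * (NormedSpace.expSeries ℂ ℂ n fun _ => L v y) = _
    rw [NormedSpace.expSeries_apply_eq_div]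
  let P : FormalMultilinearSeries ℂ X ℂ := fun n => ∫ v, c n v ∂μ
  have hP : HasFPowerSeriesOnBall (fun x => ∫ v, f v * Complex.exp (L v x) ∂μ) P 0 ⊤ := by
    refine ⟨?_, by simp, ?_⟩
    · refine ENNReal.le_of_forall_nnreal_lt fun r _ => ?_
      refine P.le_radius_of_bound (∫ v, ‖f v‖ * Real.exp (r * ‖L v‖) ∂μ) fun n => ?_
      calc ‖P n‖ * (r : ℝ) ^ n ≤ (∫ v, ‖c n v‖ ∂μ) * (r : ℝ) ^ n := by
            gcongr; exact norm_integral_le_integral_norm _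
        _ = ∫ v, ‖c n v‖ * (r : ℝ) ^ n ∂μ := (integral_mul_const _ _).symm
        _ ≤ _ := integral_mono ((hc_int n).norm.mul_const _) (h r) (hc_exp r r.2 n)
    · intro y _
      have happ (n : ℕ) : (P n fun _ => y) = ∫ v, f v * ((L v y) ^ n / n.factorial) ∂μ := by
        simp only [P]
        rw [ContinuousMultilinearMap.integral_apply (hc_int n)]
        simp only [hc_apply]
      simp only [happ, zero_add]
      have hreal (x : ℝ) : HasSum (fun n : ℕ => x ^ n / n.factorial) (Real.exp x) := by
        rw [Real.exp_eq_exp_ℝ]; exact NormedSpace.expSeries_div_hasSum_exp x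
      have hLy : AEStronglyMeasurable (fun v => L v y) μ :=
        (ContinuousLinearMap.apply ℂ ℂ y).continuous.comp_aestronglyMeasurable hL
      refine hasSum_integral_of_dominated_convergence
        (fun n v => ‖f v‖ * ((‖y‖ * ‖L v‖) ^ n / n.factorial)) (fun n => ?_) (fun n => ?_) ?_ ?_ ?_
      · exact hf.mul ((hLy.pow n).mul aestronglyMeasurable_const)
      · refine .of_forall fun v => ?_
        rw [norm_mul, norm_div, norm_pow, Complex.norm_natCast, mul_comm ‖y‖]
        gcongr
        exact (L v).le_opNorm y
      · exact .of_forall fun v => ((hreal _).mul_left _).summable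
      · simp only [((hreal _).mul_left _).tsum_eq]
        exact h ‖y‖
      · refine .of_forall fun v => ?_
        rw [Complex.exp_eq_exp_ℂ]
        exact (NormedSpace.expSeries_div_hasSum_exp (L v y)).mul_left _
  simpa using hP.analyticOnNhd

/-- The real value of the LSZ action; since `Φ*Φ` is Hermitian, the trace of its square is the sum
of the squared moduli of its entries. -/
noncomputable def lszActionReal (N : ℕ) (E Et : Fin N → ℝ) (lam : ℝ)
    (Φ : Fin N → Fin N → ℂ) : ℝ :=
  (∑ n, ∑ m, (E n + Et m) * ‖Φ n m‖ ^ 2)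
    + lam / 2 * ∑ i, ∑ j, Complex.normSq (((Matrix.of Φ)ᴴ * Matrix.of Φ) i j)

theorem lszAction_eq_ofReal (N : ℕ) (E Et : Fin N → ℝ) (lam : ℝ) (Φ : Fin N → Fin N → ℂ) :
    lszAction N E Et lam Φ = (lszActionReal N E Et lam Φ : ℂ) := by
  have htr (A : Matrix (Fin N) (Fin N) ℂ) (hA : Aᴴ = A) :
      (A * A).trace = ((∑ i, ∑ j, Complex.normSq (A i j) : ℝ) : ℂ) := by
    simp only [Matrix.trace, Matrix.diag_apply, Matrix.mul_apply]
    push_cast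
    refine Finset.sum_congr rfl fun i _ => Finset.sum_congr rfl fun j _ => ?_
    have hji : A j i = star (A i j) := by
      conv_lhs => rw [← hA]
      rfl
    rw [hji, ← Complex.mul_conj]
    rfl
  unfold lszAction lszActionReal
  rw [htr _ (by simp)]
  simp only [Complex.normSq_eq_norm_sq]
  push_cast
  rfl

theorem continuous_lszAction (N : ℕ) (E Et : Fin N → ℝ) (lam : ℝ) :
    Continuous (lszAction N E Et lam) := by
  unfold lszAction
  have h : Continuous fun Φ : Fin N → Fin N → ℂ => Matrix.of Φ := continuous_id
  have hs : Continuous fun Φ : Fin N → Fin N → ℂ => (Matrix.of Φ)ᴴ * Matrix.of Φ :=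
    h.matrix_conjTranspose.matrix_mul h
  refine Continuous.add ?_ (continuous_const.mul (hs.matrix_mul hs).matrix_trace)
  have := Complex.continuous_normSq
  fun_prop

theorem le_lszActionReal {N : ℕ} {E Et : Fin N → ℝ} {lam : ℝ} (hlam : 0 ≤ lam)
    (Φ : Fin N → Fin N → ℂ) :
    ∑ n, ∑ m, (E n + Et m) * ‖Φ n m‖ ^ 2 ≤ lszActionReal N E Et lam Φ := by
  unfold lszActionReal
  have : 0 ≤ ∑ i, ∑ j, Complex.normSq (((Matrix.of Φ)ᴴ * Matrix.of Φ) i j) :=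
    Finset.sum_nonneg fun i _ => Finset.sum_nonneg fun j _ => Complex.normSq_nonneg _
  have := mul_nonneg (div_nonneg hlam zero_le_two) this
  linarith

theorem integrable_exp_neg_mul_norm_sq_add {a : ℝ} (ha : 0 < a) (c : ℝ) :
    Integrable fun z : ℂ => Real.exp (-a * ‖z‖ ^ 2 + c * ‖z‖) := by
  have h0 : Integrable fun z : ℂ => Real.exp (-(a / 2) * ‖z‖ ^ 2) := by
    have h1 := (GaussianFourier.integrable_cexp_neg_mul_sq_norm_add (V := ℂ)
      (b := ((a / 2 : ℝ) : ℂ)) (by simpa using ha) 0 0).norm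
    refine h1.congr (.of_forall fun z => ?_)
    simp only [Complex.norm_exp]
    congr 1
    have : (-((a / 2 : ℝ) : ℂ) * (‖z‖ : ℂ) ^ 2 + 0 * ((inner ℝ (0 : ℂ) z : ℝ) : ℂ))
      = ((-(a / 2) * ‖z‖ ^ 2 : ℝ) : ℂ) := by push_cast; ring
    rw [this, Complex.ofReal_re]
  refine (h0.const_mul (Real.exp (c ^ 2 / (2 * a)))).mono'
    (Continuous.aestronglyMeasurable (by fun_prop)) (.of_forall fun z => ?_)
  rw [Real.norm_of_nonneg (Real.exp_pos _).le, ← Real.exp_add]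
  -- Completing the square: the difference of the exponents is `(a‖z‖ - c)² / (2a)`.
  have key : c ^ 2 / (2 * a) + -(a / 2) * ‖z‖ ^ 2 - (-a * ‖z‖ ^ 2 + c * ‖z‖)
      = (a * ‖z‖ - c) ^ 2 / (2 * a) := by field_simp; ring
  have : 0 ≤ (a * ‖z‖ - c) ^ 2 / (2 * a) := by positivity
  exact Real.exp_le_exp.mpr (by linarith)

/-- The Gaussian majorant factorises over the matrix entries. -/
theorem integrable_exp_sum_entries {N : ℕ} {a : Fin N → Fin N → ℝ} (ha : ∀ n m, 0 < a n m)
    (c : ℝ) :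
    Integrable fun Φ : Fin N → Fin N → ℂ =>
      Real.exp (∑ n, ∑ m, (-a n m * ‖Φ n m‖ ^ 2 + c * ‖Φ n m‖)) := by
  simp only [Real.exp_sum]
  refine Integrable.fintype_prod (𝕜 := ℝ)
    (f := fun n (φ : Fin N → ℂ) => ∏ m, Real.exp (-a n m * ‖φ m‖ ^ 2 + c * ‖φ m‖)) fun n => ?_
  exact Integrable.fintype_prod (𝕜 := ℝ)
    (f := fun m (z : ℂ) => Real.exp (-a n m * ‖z‖ ^ 2 + c * ‖z‖))
    fun m => integrable_exp_neg_mul_norm_sq_add (ha n m) c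

/-- The source term `(J, K) ↦ N (Σ J_{nm} conj Φ_{nm} + Σ K_{mn} Φ_{nm})` at fixed `Φ`, as a
continuous linear functional of the sources. -/
noncomputable def lszSource (N : ℕ) (Φ : Fin N → Fin N → ℂ) :
    (Fin N → Fin N → ℂ) × (Fin N → Fin N → ℂ) →L[ℂ] ℂ :=
  ∑ n, ∑ m, (((N : ℂ) * (starRingEnd ℂ) (Φ n m)) •
      ((ContinuousLinearMap.proj m).comp ((ContinuousLinearMap.proj n).comp
        (ContinuousLinearMap.fst ℂ (Fin N → Fin N → ℂ) (Fin N → Fin N → ℂ))) :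
          (Fin N → Fin N → ℂ) × (Fin N → Fin N → ℂ) →L[ℂ] ℂ)
    + ((N : ℂ) * Φ n m) •
      ((ContinuousLinearMap.proj n).comp ((ContinuousLinearMap.proj m).comp
        (ContinuousLinearMap.snd ℂ (Fin N → Fin N → ℂ) (Fin N → Fin N → ℂ))) :
          (Fin N → Fin N → ℂ) × (Fin N → Fin N → ℂ) →L[ℂ] ℂ))

theorem lszSource_apply (N : ℕ) (Φ J K : Fin N → Fin N → ℂ) :
    lszSource N Φ (J, K) = (N : ℂ) * ((∑ m, ∑ n, J n m * (starRingEnd ℂ) (Φ n m))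
      + ∑ m, ∑ n, K m n * Φ n m) := by
  rw [Finset.sum_comm (f := fun m n => J n m * (starRingEnd ℂ) (Φ n m)),
    Finset.sum_comm (f := fun m n => K m n * Φ n m)]
  simp only [lszSource, _root_.sum_apply, ← Finset.sum_add_distrib, Finset.mul_sum]
  refine Finset.sum_congr rfl fun n _ => Finset.sum_congr rfl fun m _ => ?_
  simp
  ring

theorem norm_lszSource_le (N : ℕ) (Φ : Fin N → Fin N → ℂ) :
    ‖lszSource N Φ‖ ≤ ∑ n, ∑ m, 2 * N * ‖Φ n m‖ := by
  refine ContinuousLinearMap.opNorm_le_bound _ (by positivity) fun p => ?_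
  obtain ⟨J, K⟩ := p
  simp only [lszSource, _root_.sum_apply, Finset.sum_mul]
  refine norm_sum_le_of_le _ fun n _ => norm_sum_le_of_le _ fun m _ => ?_
  have hJ : ‖J n m‖ ≤ ‖(J, K)‖ :=
    ((norm_le_pi_norm (J n) m).trans (norm_le_pi_norm J n)).trans (norm_fst_le (J, K))
  have hK : ‖K m n‖ ≤ ‖(J, K)‖ :=
    ((norm_le_pi_norm (K m) n).trans (norm_le_pi_norm K m)).trans (norm_snd_le (J, K))
  calc _ ≤ N * ‖Φ n m‖ * ‖J n m‖ + N * ‖Φ n m‖ * ‖K m n‖ := by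
        refine (norm_add_le _ _).trans (le_of_eq ?_)
        simp
    _ ≤ N * ‖Φ n m‖ * ‖(J, K)‖ + N * ‖Φ n m‖ * ‖(J, K)‖ := by gcongr
    _ = _ := by ring

theorem continuous_lszSource (N : ℕ) : Continuous (lszSource N) := by
  unfold lszSource
  have := Complex.continuous_conj
  fun_prop

theorem lszIntegrand_eq (N : ℕ) (E Et : Fin N → ℝ) (lam : ℝ) (J K Φ : Fin N → Fin N → ℂ) :
    lszIntegrand N E Et lam J K Φ =
      Complex.exp (-(N : ℂ) * lszAction N E Et lam Φ) * Complex.exp (lszSource N Φ (J, K)) := by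
  rw [lszIntegrand, Complex.exp_add, lszSource_apply]

/-- The Boltzmann weight beats every exponential of the norm of the source functional: the quartic
term only helps, and the quadratic term is positive definite. -/
theorem integrable_weight_mul_exp_source {N : ℕ} (hN : 1 ≤ N) {E Et : Fin N → ℝ}
    (hE : ∀ n, 0 < E n) (hEt : ∀ n, 0 < Et n) {lam : ℝ} (hlam : 0 ≤ lam) (r : ℝ) :
    Integrable fun Φ : Fin N → Fin N → ℂ =>
      ‖Complex.exp (-(N : ℂ) * lszAction N E Et lam Φ)‖ * Real.exp (r * ‖lszSource N Φ‖) := by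
  have hN' : (0 : ℝ) < N := by exact_mod_cast hN
  have hS := continuous_lszAction N E Et lam
  have hL := continuous_lszSource N
  refine (integrable_exp_sum_entries (a := fun n m => N * (E n + Et m))
    (fun n m => mul_pos hN' (add_pos (hE n) (hEt m))) (|r| * (2 * N))).mono'
    (Continuous.aestronglyMeasurable (by fun_prop)) (.of_forall fun Φ => ?_)
  have hre : (-(N : ℂ) * lszAction N E Et lam Φ).re = -(N * lszActionReal N E Et lam Φ) := by
    rw [lszAction_eq_ofReal]; simp
  rw [Real.norm_of_nonneg (by positivity), Complex.norm_exp, hre, ← Real.exp_add]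
  refine Real.exp_le_exp.mpr ?_
  have h1 := mul_le_mul_of_nonneg_left (le_lszActionReal (E := E) (Et := Et) hlam Φ) hN'.le
  have h2 : r * ‖lszSource N Φ‖ ≤ |r| * ∑ n, ∑ m, 2 * N * ‖Φ n m‖ := by
    gcongr
    · exact le_abs_self r
    · exact norm_lszSource_le N Φ
  have h3 : ∑ n, ∑ m, (-(N * (E n + Et m)) * ‖Φ n m‖ ^ 2 + |r| * (2 * N) * ‖Φ n m‖)
      = -(N * ∑ n, ∑ m, (E n + Et m) * ‖Φ n m‖ ^ 2) + |r| * ∑ n, ∑ m, 2 * N * ‖Φ n m‖ := by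
    simp only [Finset.mul_sum, ← Finset.sum_neg_distrib, ← Finset.sum_add_distrib]
    refine Finset.sum_congr rfl fun n _ => Finset.sum_congr rfl fun m _ => ?_
    ring
  rw [h3]
  linarith

/-- For every `λ ≥ 0` and all sources `J`, `K`, the LSZ integrand is
absolutely integrable on `M_N(ℂ)`; the partition function `Z` is an analytic function
of the `2N²` complex entries of `(J,K)`; and `Z(0,0)` is a strictly positive real number. -/
theorem lsz_partition_function_wellDefined
    (N : ℕ) (hN : 1 ≤ N) (E Et : Fin N → ℝ)
    (hE : ∀ n, 0 < E n) (hEt : ∀ n, 0 < Et n) (lam : ℝ) (hlam : 0 ≤ lam) :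
    (∀ J K : Fin N → Fin N → ℂ, Integrable (lszIntegrand N E Et lam J K)) ∧
    AnalyticOnNhd ℂ
      (fun p : (Fin N → Fin N → ℂ) × (Fin N → Fin N → ℂ) => lszZ N E Et lam p.1 p.2)
      Set.univ ∧
    ((lszZ N E Et lam 0 0).im = 0 ∧ 0 < (lszZ N E Et lam 0 0).re) := by
  have hS := continuous_lszAction N E Et lam
  have hL := continuous_lszSource N
  have hw := integrable_weight_mul_exp_source hN hE hEt hlam
  have hint (J K : Fin N → Fin N → ℂ) : Integrable (lszIntegrand N E Et lam J K) := by
    have heq : lszIntegrand N E Et lam J K = fun Φ =>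
        Complex.exp (-(N : ℂ) * lszAction N E Et lam Φ) * Complex.exp (lszSource N Φ (J, K)) :=
      funext (lszIntegrand_eq N E Et lam J K)
    rw [heq]
    refine (hw ‖(J, K)‖).mono' (Continuous.aestronglyMeasurable (by fun_prop))
      (.of_forall fun Φ => ?_)
    rw [norm_mul]
    gcongr
    rw [Complex.norm_exp, mul_comm]
    exact Real.exp_le_exp.mpr ((Complex.re_le_norm _).trans ((lszSource N Φ).le_opNorm _))
  refine ⟨hint, ?_, ?_⟩
  · simp only [lszZ, lszIntegrand_eq]
    exact analyticOnNhd_integral_mul_exp (Continuous.aestronglyMeasurable (by fun_prop))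
      hL.aestronglyMeasurable hw
  · have h0 : lszIntegrand N E Et lam 0 0 = fun Φ =>
        ((Real.exp (-N * lszActionReal N E Et lam Φ) : ℝ) : ℂ) := by
      funext Φ
      rw [lszIntegrand, lszAction_eq_ofReal]
      simp
    have hZ : lszZ N E Et lam 0 0 =
        ((∫ Φ, Real.exp (-N * lszActionReal N E Et lam Φ) : ℝ) : ℂ) := by
      rw [lszZ, h0]
      exact integral_ofReal
    have hreal : Integrable fun Φ => Real.exp (-N * lszActionReal N E Et lam Φ) := by
      have := (hint 0 0).re
      rw [h0] at this
      exact this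
    have hpos : (volume : Measure (Fin N → Fin N → ℂ)).IsOpenPosMeasure :=
      Measure.pi.isOpenPosMeasure fun _ : Fin N => (volume : Measure (Fin N → ℂ))
    have hvol : (volume : Measure (Fin N → Fin N → ℂ)) ≠ 0 :=
      Measure.measure_univ_ne_zero.mp (isOpen_univ.measure_ne_zero volume Set.univ_nonempty)
    have : NeZero (volume : Measure (Fin N → Fin N → ℂ)) := ⟨hvol⟩
    rw [hZ]
    exact ⟨Complex.ofReal_im _, by rw [Complex.ofReal_re]; exact integral_exp_pos hreal⟩
end

section
/- For every coupling λ ≥ 0, all indices k, l ∈ {1,…,N} and all source matrices J, K ∈ M_N(ℂ), the LSZ partition function satisfies the Ward identity Σ_{n=1}^N [ (E_k − E_l)·∂²Z/∂J_{ln}∂K_{nk}(J,K) + N·K_{nl}·∂Z/∂K_{nk}(J,K) − N·J_{kn}·∂Z/∂J_{ln}(J,K) ] = 0. (The identity is independent of the second external field Ẽ and of λ; it follows from the invariance of the Lebesgue measure and of the action under the unitary transformation Φ ↦ UΦ, Φ* ↦ Φ*U*.) -/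
/-!
The Ward identity is the infinitesimal form of the invariance of the measure under `Φ ↦ UΦ`.
It is derived here by integration by parts with the complexified generator of these
rotations, the differential operator
`Σ_n (Φ_{kn} ∂/∂Φ_{ln} - conj(Φ_{ln}) ∂/∂conj(Φ_{kn}))` in Wirtinger derivatives.

* Write `exp(-N S + N (sources))` for the Boltzmann weight. It decays like a Gaussian because
  `E_n + Ẽ_m > 0` and `Tr((Φ*Φ)²) ≥ 0`, so every function of at most exponential growth
  (`ExpGrowth`) is integrable against it (`ExpGrowth.integrable`).
* Hence source derivatives may be taken under the integral: `∂/∂J_{ab}` inserts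
  `N conj(Φ_{ab})` and `∂/∂K_{ab}` inserts `N Φ_{ba}` (`dJ_integral`, `dK_integral`).
* Integration by parts in `Φ_{ab}` (`integral_by_parts`) shows that
  `∫ Φ_{kn} ∂/∂Φ_{ln}(weight)` and `∫ conj(Φ_{ln}) ∂/∂conj(Φ_{kn})(weight)` are both
  equal to `-δ_{kl} Z`, so their difference vanishes.
* Summed over `n`, this difference is the Ward identity: the quartic contributions are both
  multiples of `(ΦΦ*ΦΦ*)_{kl}` with the same factor and cancel, the `Ẽ` terms cancel as well, and
  `E_k - E_l` and the source terms remain (`ward_pointwise`).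
-/

open MeasureTheory Matrix

/-- The elementary matrix with a single `1` at position `(a,b)`. -/
def eMat (N : ℕ) (a b : Fin N) : Fin N → Fin N → ℂ :=
  fun i j => if i = a ∧ j = b then 1 else 0

/-- The holomorphic partial derivative `∂/∂J_{ab}` of a function of `(J,K)`. -/
noncomputable def dJ (N : ℕ) (a b : Fin N)
    (f : (Fin N → Fin N → ℂ) → (Fin N → Fin N → ℂ) → ℂ) :
    (Fin N → Fin N → ℂ) → (Fin N → Fin N → ℂ) → ℂ :=
  fun J K => deriv (fun t : ℂ => f (J + t • eMat N a b) K) 0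

/-- The holomorphic partial derivative `∂/∂K_{ab}` of a function of `(J,K)`. -/
noncomputable def dK (N : ℕ) (a b : Fin N)
    (f : (Fin N → Fin N → ℂ) → (Fin N → Fin N → ℂ) → ℂ) :
    (Fin N → Fin N → ℂ) → (Fin N → Fin N → ℂ) → ℂ :=
  fun J K => deriv (fun t : ℂ => f J (K + t • eMat N a b)) 0


/-! ### Functions of exponential growth and integrability -/

/-- The entrywise `ℓ¹` norm `Σ_{n,m} |Φ_{nm}|`. -/
noncomputable def entryNorm {N : ℕ} (Φ : Fin N → Fin N → ℂ) : ℝ := ∑ n, ∑ m, ‖Φ n m‖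

/-- A continuous function on matrix space of at most exponential growth. The class is closed under
sums and products and contains every polynomial in the entries and their conjugates. -/
def ExpGrowth {N : ℕ} (f : (Fin N → Fin N → ℂ) → ℂ) : Prop :=
  Continuous f ∧ ∃ C R : ℝ, 0 ≤ C ∧ 0 ≤ R ∧ ∀ Φ, ‖f Φ‖ ≤ C * Real.exp (R * entryNorm Φ)

lemma entryNorm_nonneg {N : ℕ} (Φ : Fin N → Fin N → ℂ) : 0 ≤ entryNorm Φ :=
  Finset.sum_nonneg fun _ _ => Finset.sum_nonneg fun _ _ => norm_nonneg _

lemma norm_le_entryNorm {N : ℕ} (Φ : Fin N → Fin N → ℂ) (a b : Fin N) :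
    ‖Φ a b‖ ≤ entryNorm Φ :=
  (Finset.single_le_sum (f := fun m => ‖Φ a m‖) (fun _ _ => norm_nonneg _)
    (Finset.mem_univ b)).trans
  (Finset.single_le_sum (f := fun n => ∑ m, ‖Φ n m‖)
    (fun _ _ => Finset.sum_nonneg fun _ _ => norm_nonneg _) (Finset.mem_univ a))

lemma continuous_entryNorm {N : ℕ} : Continuous (entryNorm (N := N)) := by
  unfold entryNorm; fun_prop

namespace ExpGrowth

variable {N : ℕ} {f g : (Fin N → Fin N → ℂ) → ℂ}

lemma const (c : ℂ) : ExpGrowth (fun _ : Fin N → Fin N → ℂ => c) :=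
  ⟨continuous_const, ‖c‖, 0, norm_nonneg _, le_rfl, fun Φ => by simp⟩

lemma entry (a b : Fin N) : ExpGrowth (fun Φ : Fin N → Fin N → ℂ => Φ a b) := by
  refine ⟨by fun_prop, 1, 1, zero_le_one, zero_le_one, fun Φ => ?_⟩
  have := norm_le_entryNorm Φ a b
  have := Real.add_one_le_exp (entryNorm Φ)
  simp only [one_mul]; linarith

lemma star_entry (a b : Fin N) :
    ExpGrowth (fun Φ : Fin N → Fin N → ℂ => (starRingEnd ℂ) (Φ a b)) := by
  obtain ⟨hc, C, R, hC, hR, h⟩ := entry a b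
  refine ⟨?_, C, R, hC, hR, fun Φ => ?_⟩
  · exact Complex.continuous_conj.comp hc
  · simpa using h Φ

lemma mul (hf : ExpGrowth f) (hg : ExpGrowth g) : ExpGrowth (fun Φ => f Φ * g Φ) := by
  obtain ⟨hfc, C, R, hC, hR, h⟩ := hf
  obtain ⟨hgc, C', R', hC', hR', h'⟩ := hg
  refine ⟨hfc.mul hgc, C * C', R + R', by positivity, by positivity, fun Φ => ?_⟩
  rw [norm_mul, add_mul, Real.exp_add]
  calc _ ≤ (C * Real.exp (R * entryNorm Φ)) * (C' * Real.exp (R' * entryNorm Φ)) :=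
        mul_le_mul (h Φ) (h' Φ) (norm_nonneg _) (by positivity)
    _ = _ := by ring

lemma add (hf : ExpGrowth f) (hg : ExpGrowth g) : ExpGrowth (fun Φ => f Φ + g Φ) := by
  obtain ⟨hfc, C, R, hC, hR, h⟩ := hf
  obtain ⟨hgc, C', R', hC', hR', h'⟩ := hg
  refine ⟨hfc.add hgc, C + C', R + R', by positivity, by positivity, fun Φ => ?_⟩
  have h0 := entryNorm_nonneg Φ
  have e1 : Real.exp (R * entryNorm Φ) ≤ Real.exp ((R + R') * entryNorm Φ) :=
    Real.exp_le_exp.2 (by nlinarith)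
  have e2 : Real.exp (R' * entryNorm Φ) ≤ Real.exp ((R + R') * entryNorm Φ) :=
    Real.exp_le_exp.2 (by nlinarith)
  calc _ ≤ ‖f Φ‖ + ‖g Φ‖ := norm_add_le _ _
    _ ≤ C * Real.exp (R * entryNorm Φ) + C' * Real.exp (R' * entryNorm Φ) := add_le_add (h Φ) (h' Φ)
    _ ≤ _ := by nlinarith [mul_le_mul_of_nonneg_left e1 hC, mul_le_mul_of_nonneg_left e2 hC']

lemma sum {ι : Type*} (s : Finset ι) {F : ι → (Fin N → Fin N → ℂ) → ℂ}
    (h : ∀ i, ExpGrowth (F i)) : ExpGrowth (fun Φ => ∑ i ∈ s, F i Φ) := by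
  classical
  induction s using Finset.induction_on with
  | empty => simpa using const 0
  | insert a s ha ih => simpa [Finset.sum_insert ha] using (h a).add ih

lemma matrix_mul {A B : (Fin N → Fin N → ℂ) → Matrix (Fin N) (Fin N) ℂ}
    (hA : ∀ i j, ExpGrowth (fun Φ => A Φ i j)) (hB : ∀ i j, ExpGrowth (fun Φ => B Φ i j))
    (i j : Fin N) : ExpGrowth (fun Φ => (A Φ * B Φ) i j) := by
  simp only [Matrix.mul_apply]
  exact sum _ fun p => (hA i p).mul (hB p j)

end ExpGrowth

lemma integrable_gaussian {c : ℝ} (hc : 0 < c) (r : ℝ) :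
    Integrable (fun z : ℂ => Real.exp (-c * ‖z‖ ^ 2 + r * ‖z‖)) := by
  have h := (GaussianFourier.integrable_cexp_neg_mul_sq_norm_add (V := ℂ) (b := ((c / 2 : ℝ) : ℂ))
    (by simpa using hc) 0 0).norm.const_mul (Real.exp (r ^ 2 / (2 * c)))
  refine h.mono' (by fun_prop) (Filter.Eventually.of_forall fun z => ?_)
  rw [Real.norm_eq_abs, Real.abs_exp, Complex.norm_exp, ← Real.exp_add]
  refine Real.exp_le_exp.2 ?_
  have e : (-((c / 2 : ℝ) : ℂ) * (‖z‖ : ℂ) ^ 2 + 0 * ((inner ℝ (0 : ℂ) z : ℝ) : ℂ)).re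
      = -(c / 2) * ‖z‖ ^ 2 := by
    rw [zero_mul, add_zero]
    norm_cast
  rw [e]
  -- completing the square in `‖z‖`
  have : r ^ 2 / (2 * c) + -(c / 2) * ‖z‖ ^ 2 - (-c * ‖z‖ ^ 2 + r * ‖z‖)
      = (c * ‖z‖ - r) ^ 2 / (2 * c) := by field_simp; ring
  have : 0 ≤ (c * ‖z‖ - r) ^ 2 / (2 * c) := by positivity
  linarith

lemma integrable_prod_gaussian {N : ℕ} {c : Fin N → Fin N → ℝ} (hc : ∀ n m, 0 < c n m)
    (r : Fin N → Fin N → ℝ) :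
    Integrable (fun Φ : Fin N → Fin N → ℂ =>
      ∏ n, ∏ m, Real.exp (-c n m * ‖Φ n m‖ ^ 2 + r n m * ‖Φ n m‖)) :=
  Integrable.fintype_prod
    (f := fun n (φ : Fin N → ℂ) => ∏ m, Real.exp (-c n m * ‖φ m‖ ^ 2 + r n m * ‖φ m‖))
    fun n => Integrable.fintype_prod
      (f := fun m (z : ℂ) => Real.exp (-c n m * ‖z‖ ^ 2 + r n m * ‖z‖))
      fun m => integrable_gaussian (hc n m) (r n m)

open scoped ComplexOrder in
/-- `Tr((Φ*Φ)²) ≥ 0`, so the quartic term only improves the Gaussian decay. -/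
lemma quartic_re_nonneg {N : ℕ} (Φ : Matrix (Fin N) (Fin N) ℂ) :
    0 ≤ ((Φᴴ * Φ * (Φᴴ * Φ)).trace).re := by
  have h := (Matrix.posSemidef_conjTranspose_mul_self (Φᴴ * Φ)).trace_nonneg
  rw [Matrix.conjTranspose_mul, Matrix.conjTranspose_conjTranspose] at h
  exact (Complex.le_def.1 h).1

lemma norm_lszIntegrand_le (N : ℕ) (E Et : Fin N → ℝ) (lam : ℝ) (hlam : 0 ≤ lam)
    (J K Φ : Fin N → Fin N → ℂ) :
    ‖lszIntegrand N E Et lam J K Φ‖ ≤ Real.exp (∑ n, ∑ m,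
      (-(N * (E n + Et m)) * ‖Φ n m‖ ^ 2 + N * (‖J n m‖ + ‖K m n‖) * ‖Φ n m‖)) := by
  rw [lszIntegrand, Complex.norm_exp]
  refine Real.exp_le_exp.2 ?_
  have hS : ∑ n, ∑ m, (E n + Et m) * ‖Φ n m‖ ^ 2 ≤ (lszAction N E Et lam Φ).re := by
    rw [lszAction, Complex.add_re, Complex.re_ofReal_mul]
    have := mul_nonneg (div_nonneg hlam zero_le_two) (quartic_re_nonneg (Matrix.of Φ))
    have e : (∑ n, ∑ m, (((E n + Et m : ℝ)) : ℂ) * ((Complex.normSq (Φ n m) : ℝ) : ℂ)).re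
        = ∑ n, ∑ m, (E n + Et m) * ‖Φ n m‖ ^ 2 := by
      simp only [Complex.re_sum, Complex.re_ofReal_mul, Complex.ofReal_re, Complex.normSq_eq_norm_sq]
    rw [e]
    linarith
  have hJ : (∑ m, ∑ n, J n m * (starRingEnd ℂ) (Φ n m)).re ≤ ∑ n, ∑ m, ‖J n m‖ * ‖Φ n m‖ := by
    rw [Finset.sum_comm]
    simp only [Complex.re_sum]
    gcongr with n _ m _
    refine (Complex.re_le_norm _).trans ?_
    simp
  have hK : (∑ m, ∑ n, K m n * Φ n m).re ≤ ∑ n, ∑ m, ‖K m n‖ * ‖Φ n m‖ := by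
    rw [Finset.sum_comm]
    simp only [Complex.re_sum]
    gcongr with n _ m _
    refine (Complex.re_le_norm _).trans ?_
    simp
  have e : ∑ n, ∑ m, (-(N * (E n + Et m)) * ‖Φ n m‖ ^ 2 + N * (‖J n m‖ + ‖K m n‖) * ‖Φ n m‖)
      = -(N : ℝ) * ∑ n, ∑ m, (E n + Et m) * ‖Φ n m‖ ^ 2 + N * (∑ n, ∑ m, ‖J n m‖ * ‖Φ n m‖
        + ∑ n, ∑ m, ‖K m n‖ * ‖Φ n m‖) := by
    simp only [Finset.mul_sum, ← Finset.sum_add_distrib]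
    refine Finset.sum_congr rfl fun n _ => Finset.sum_congr rfl fun m _ => by ring
  rw [e]
  have e2 : ∀ a b c : ℂ, (-(N : ℂ) * a + (N : ℂ) * (b + c)).re
      = -(N : ℝ) * a.re + N * (b.re + c.re) := by
    intro a b c; simp
  rw [e2]
  have hN : (0 : ℝ) ≤ N := Nat.cast_nonneg N
  nlinarith [mul_le_mul_of_nonneg_left hS hN, mul_le_mul_of_nonneg_left hJ hN,
    mul_le_mul_of_nonneg_left hK hN]

lemma continuous_lszIntegrand (N : ℕ) (E Et : Fin N → ℝ) (lam : ℝ) (J K : Fin N → Fin N → ℂ) :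
    Continuous (lszIntegrand N E Et lam J K) := by
  unfold lszIntegrand lszAction
  have h1 : Continuous fun Φ : Fin N → Fin N → ℂ => Matrix.of Φ := continuous_id
  have h2 : Continuous fun z : ℂ => Complex.normSq z := Complex.continuous_normSq
  have h3 : Continuous fun z : ℂ => (starRingEnd ℂ) z := Complex.continuous_conj
  have h4 : Continuous fun Φ : Fin N → Fin N → ℂ =>
      ((((Matrix.of Φ)ᴴ * Matrix.of Φ) * ((Matrix.of Φ)ᴴ * Matrix.of Φ)).trace) :=
    (((h1.matrix_conjTranspose).matrix_mul h1).matrix_mul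
      ((h1.matrix_conjTranspose).matrix_mul h1)).matrix_trace
  fun_prop

/-- Functions of exponential growth are integrable against the Boltzmann weight. -/
lemma ExpGrowth.integrable {N : ℕ} (hN : 1 ≤ N) {E Et : Fin N → ℝ}
    (hE : ∀ n, 0 < E n) (hEt : ∀ n, 0 < Et n) {lam : ℝ} (hlam : 0 ≤ lam)
    (J K : Fin N → Fin N → ℂ) {f : (Fin N → Fin N → ℂ) → ℂ} (hf : ExpGrowth f) :
    Integrable (fun Φ => f Φ * lszIntegrand N E Et lam J K Φ) := by
  obtain ⟨hfc, C, R, hC, hR, h⟩ := hf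
  have hN' : (0 : ℝ) < N := by exact_mod_cast hN
  have hI := (integrable_prod_gaussian (N := N) (c := fun n m => N * (E n + Et m))
    (fun n m => mul_pos hN' (add_pos (hE n) (hEt m)))
    (fun n m => R + N * (‖J n m‖ + ‖K m n‖))).const_mul C
  refine hI.mono' (hfc.mul (continuous_lszIntegrand ..)).aestronglyMeasurable
    (Filter.Eventually.of_forall fun Φ => ?_)
  rw [norm_mul]
  refine (mul_le_mul (h Φ) (norm_lszIntegrand_le N E Et lam hlam J K Φ) (norm_nonneg _)
    (by positivity)).trans (le_of_eq ?_)
  simp only [← Real.exp_sum]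
  rw [mul_assoc, ← Real.exp_add]
  congr 2
  simp only [entryNorm, Finset.mul_sum, ← Finset.sum_add_distrib]
  refine Finset.sum_congr rfl fun n _ => Finset.sum_congr rfl fun m _ => by ring

/-! ### Source derivatives of the partition function -/

/-- Differentiation under the integral sign along a line of sources: if the weight picks up the
factor `exp (t L)`, its derivative at `t = 0` brings down `L`. -/
lemma deriv_integral_source {N : ℕ} (hN : 1 ≤ N) {E Et : Fin N → ℝ}
    (hE : ∀ n, 0 < E n) (hEt : ∀ n, 0 < Et n) {lam : ℝ} (hlam : 0 ≤ lam)
    (J K : Fin N → Fin N → ℂ) {f L : (Fin N → Fin N → ℂ) → ℂ} (hf : ExpGrowth f)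
    (hL : Continuous L) (r : ℝ) (hr : 0 ≤ r) (hLr : ∀ Φ, ‖L Φ‖ ≤ r * entryNorm Φ) :
    deriv (fun t : ℂ => ∫ Φ, f Φ * (lszIntegrand N E Et lam J K Φ * Complex.exp (t * L Φ))) 0
      = ∫ Φ, f Φ * L Φ * lszIntegrand N E Et lam J K Φ := by
  have hFc := continuous_lszIntegrand N E Et lam J K
  have hfc := hf.1
  -- the dominating function is `|f L| exp(|L|)` times the weight
  have hB : ExpGrowth (fun Φ => f Φ * L Φ * Complex.exp ((‖L Φ‖ : ℝ) : ℂ)) := by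
    have h1 : ExpGrowth L := by
      refine ⟨hL, r, 1, hr, zero_le_one, fun Φ => (hLr Φ).trans ?_⟩
      have := Real.add_one_le_exp (entryNorm Φ)
      rw [one_mul]
      exact mul_le_mul_of_nonneg_left (by linarith) hr
    refine (hf.mul h1).mul ⟨by fun_prop, 1, r, zero_le_one, hr, fun Φ => ?_⟩
    rw [Complex.norm_exp, Complex.ofReal_re, one_mul]
    exact Real.exp_le_exp.2 (hLr Φ)
  have hI := (hB.integrable hN hE hEt hlam J K).norm
  have key := hasDerivAt_integral_of_dominated_loc_of_deriv_le
    (μ := (volume : Measure (Fin N → Fin N → ℂ))) (x₀ := (0 : ℂ)) (s := Metric.ball 0 1)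
    (F := fun t Φ => f Φ * (lszIntegrand N E Et lam J K Φ * Complex.exp (t * L Φ)))
    (F' := fun t Φ => f Φ * (lszIntegrand N E Et lam J K Φ * (Complex.exp (t * L Φ) * L Φ)))
    (bound := fun Φ => ‖f Φ * L Φ * Complex.exp ((‖L Φ‖ : ℝ) : ℂ) * lszIntegrand N E Et lam J K Φ‖)
    (Metric.ball_mem_nhds _ one_pos)
    (Filter.Eventually.of_forall fun t => by
      exact Continuous.aestronglyMeasurable (by fun_prop))
    (by simpa using hf.integrable hN hE hEt hlam J K)
    (Continuous.aestronglyMeasurable (by fun_prop))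
    (Filter.Eventually.of_forall fun Φ t ht => by
      have ht' : ‖t‖ ≤ 1 := by simpa using (Metric.mem_ball.1 ht).le
      have : ‖Complex.exp (t * L Φ)‖ ≤ ‖Complex.exp ((‖L Φ‖ : ℝ) : ℂ)‖ := by
        rw [Complex.norm_exp, Complex.norm_exp, Complex.ofReal_re]
        refine Real.exp_le_exp.2 ((Complex.re_le_norm _).trans ?_)
        rw [norm_mul]
        exact mul_le_of_le_one_left (norm_nonneg _) ht'
      simp only [norm_mul]
      calc _ = ‖f Φ‖ * ‖L Φ‖ * ‖lszIntegrand N E Et lam J K Φ‖ * ‖Complex.exp (t * L Φ)‖ := by ring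
        _ ≤ ‖f Φ‖ * ‖L Φ‖ * ‖lszIntegrand N E Et lam J K Φ‖ * ‖Complex.exp ((‖L Φ‖ : ℝ) : ℂ)‖ :=
          mul_le_mul_of_nonneg_left this (by positivity)
        _ = _ := by ring)
    hI
    (Filter.Eventually.of_forall fun Φ t _ => by
      have h := ((hasDerivAt_id t).mul_const (L Φ)).cexp
      simp only [id, one_mul] at h
      exact (h.const_mul _).const_mul _)
  rw [key.2.deriv]
  refine integral_congr_ae (Filter.Eventually.of_forall fun Φ => ?_)
  simp only [zero_mul, Complex.exp_zero]
  ring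

lemma lszIntegrand_add_J (N : ℕ) (E Et : Fin N → ℝ) (lam : ℝ) (J K Φ : Fin N → Fin N → ℂ)
    (a b : Fin N) (t : ℂ) :
    lszIntegrand N E Et lam (J + t • eMat N a b) K Φ
      = lszIntegrand N E Et lam J K Φ
        * Complex.exp (t * ((N : ℂ) * (starRingEnd ℂ) (Φ a b))) := by
  unfold lszIntegrand
  rw [← Complex.exp_add]
  congr 1
  have : ∑ m, ∑ n, (J + t • eMat N a b) n m * (starRingEnd ℂ) (Φ n m)
      = (∑ m, ∑ n, J n m * (starRingEnd ℂ) (Φ n m)) + t * (starRingEnd ℂ) (Φ a b) := by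
    simp [eMat, add_mul, Finset.sum_add_distrib, ite_and]
  rw [this]
  ring

lemma lszIntegrand_add_K (N : ℕ) (E Et : Fin N → ℝ) (lam : ℝ) (J K Φ : Fin N → Fin N → ℂ)
    (a b : Fin N) (t : ℂ) :
    lszIntegrand N E Et lam J (K + t • eMat N a b) Φ
      = lszIntegrand N E Et lam J K Φ * Complex.exp (t * ((N : ℂ) * Φ b a)) := by
  unfold lszIntegrand
  rw [← Complex.exp_add]
  congr 1
  have : ∑ m, ∑ n, (K + t • eMat N a b) m n * Φ n m
      = (∑ m, ∑ n, K m n * Φ n m) + t * Φ b a := by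
    simp [eMat, add_mul, Finset.sum_add_distrib, ite_and]
  rw [this]
  ring

lemma dJ_integral {N : ℕ} (hN : 1 ≤ N) {E Et : Fin N → ℝ}
    (hE : ∀ n, 0 < E n) (hEt : ∀ n, 0 < Et n) {lam : ℝ} (hlam : 0 ≤ lam)
    (a b : Fin N)
    {f : (Fin N → Fin N → ℂ) → ℂ} (hf : ExpGrowth f) (J K : Fin N → Fin N → ℂ) :
    dJ N a b (fun J K => ∫ Φ, f Φ * lszIntegrand N E Et lam J K Φ) J K
      = ∫ Φ, f Φ * ((N : ℂ) * (starRingEnd ℂ) (Φ a b)) * lszIntegrand N E Et lam J K Φ := by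
  simp only [dJ, lszIntegrand_add_J]
  refine deriv_integral_source hN hE hEt hlam J K hf
    (continuous_const.mul (ExpGrowth.star_entry a b).1) N (Nat.cast_nonneg N) fun Φ => ?_
  simpa using mul_le_mul_of_nonneg_left (norm_le_entryNorm Φ a b) (Nat.cast_nonneg N)

lemma dK_integral {N : ℕ} (hN : 1 ≤ N) {E Et : Fin N → ℝ}
    (hE : ∀ n, 0 < E n) (hEt : ∀ n, 0 < Et n) {lam : ℝ} (hlam : 0 ≤ lam)
    (a b : Fin N)
    {f : (Fin N → Fin N → ℂ) → ℂ} (hf : ExpGrowth f) (J K : Fin N → Fin N → ℂ) :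
    dK N a b (fun J K => ∫ Φ, f Φ * lszIntegrand N E Et lam J K Φ) J K
      = ∫ Φ, f Φ * ((N : ℂ) * Φ b a) * lszIntegrand N E Et lam J K Φ := by
  simp only [dK, lszIntegrand_add_K]
  refine deriv_integral_source hN hE hEt hlam J K hf (by fun_prop) N (Nat.cast_nonneg N) fun Φ => ?_
  simpa using mul_le_mul_of_nonneg_left (norm_le_entryNorm Φ b a) (Nat.cast_nonneg N)

lemma dJ_lszZ {N : ℕ} (hN : 1 ≤ N) {E Et : Fin N → ℝ}
    (hE : ∀ n, 0 < E n) (hEt : ∀ n, 0 < Et n) {lam : ℝ} (hlam : 0 ≤ lam)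
    (a b : Fin N) (J K : Fin N → Fin N → ℂ) :
    dJ N a b (lszZ N E Et lam) J K
      = ∫ Φ, (N : ℂ) * (starRingEnd ℂ) (Φ a b) * lszIntegrand N E Et lam J K Φ := by
  have h := dJ_integral hN hE hEt hlam a b (ExpGrowth.const 1) J K
  simp only [one_mul] at h
  exact h

lemma dK_lszZ {N : ℕ} (hN : 1 ≤ N) {E Et : Fin N → ℝ}
    (hE : ∀ n, 0 < E n) (hEt : ∀ n, 0 < Et n) {lam : ℝ} (hlam : 0 ≤ lam)
    (a b : Fin N) (J K : Fin N → Fin N → ℂ) :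
    dK N a b (lszZ N E Et lam) J K
      = ∫ Φ, (N : ℂ) * Φ b a * lszIntegrand N E Et lam J K Φ := by
  have h := dK_integral hN hE hEt hlam a b (ExpGrowth.const 1) J K
  simp only [one_mul] at h
  exact h

lemma dJ_dK_lszZ {N : ℕ} (hN : 1 ≤ N) {E Et : Fin N → ℝ}
    (hE : ∀ n, 0 < E n) (hEt : ∀ n, 0 < Et n) {lam : ℝ} (hlam : 0 ≤ lam)
    (a b : Fin N) (c d : Fin N) (J K : Fin N → Fin N → ℂ) :
    dJ N a b (dK N c d (lszZ N E Et lam)) J K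
      = ∫ Φ, (N : ℂ) * Φ d c * ((N : ℂ) * (starRingEnd ℂ) (Φ a b))
          * lszIntegrand N E Et lam J K Φ := by
  have : dK N c d (lszZ N E Et lam)
      = fun J K => ∫ Φ, (N : ℂ) * Φ d c * lszIntegrand N E Et lam J K Φ := by
    funext J K
    exact dK_lszZ hN hE hEt hlam c d J K
  rw [this]
  exact dJ_integral hN hE hEt hlam a b ((ExpGrowth.const _).mul (ExpGrowth.entry d c)) J K

/-! ### Derivatives of the Boltzmann weight in the field -/

/-- The Wirtinger derivative `∂/∂Φ_{ab}` of the exponent of the weight, divided by `N`. -/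
noncomputable def logDerivHol (N : ℕ) (E Et : Fin N → ℝ) (lam : ℝ) (K : Fin N → Fin N → ℂ)
    (a b : Fin N) (Φ : Fin N → Fin N → ℂ) : ℂ :=
  -((((E a + Et b : ℝ)) : ℂ) * (starRingEnd ℂ) (Φ a b))
    - (lam : ℂ) * ((Matrix.of Φ)ᴴ * Matrix.of Φ * (Matrix.of Φ)ᴴ) b a + K b a

/-- The Wirtinger derivative `∂/∂conj(Φ_{ab})` of the exponent of the weight, divided by `N`. -/
noncomputable def logDerivAnti (N : ℕ) (E Et : Fin N → ℝ) (lam : ℝ) (J : Fin N → Fin N → ℂ)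
    (a b : Fin N) (Φ : Fin N → Fin N → ℂ) : ℂ :=
  -((((E a + Et b : ℝ)) : ℂ) * Φ a b)
    - (lam : ℂ) * (Matrix.of Φ * ((Matrix.of Φ)ᴴ * Matrix.of Φ)) a b + J a b

lemma hasDerivAt_matrix_mul {N : ℕ} {A B : ℝ → Matrix (Fin N) (Fin N) ℂ}
    {A' B' : Matrix (Fin N) (Fin N) ℂ} {t : ℝ}
    (hA : ∀ i j, HasDerivAt (fun s => A s i j) (A' i j) t)
    (hB : ∀ i j, HasDerivAt (fun s => B s i j) (B' i j) t) (i j : Fin N) :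
    HasDerivAt (fun s => (A s * B s) i j) ((A' * B t + A t * B') i j) t := by
  simp only [Matrix.add_apply, Matrix.mul_apply, ← Finset.sum_add_distrib]
  exact HasDerivAt.fun_sum fun p _ => (hA i p).mul (hB p j)

lemma hasLineDerivAt_entry {N : ℕ} (Φ v : Fin N → Fin N → ℂ) (i j : Fin N) :
    HasDerivAt (fun t : ℝ => (Φ + t • v) i j) (v i j) 0 := by
  have h := ((hasDerivAt_id (0 : ℝ)).smul_const (v i j)).const_add (Φ i j)
  simpa using h

lemma hasLineDerivAt_star_entry {N : ℕ} (Φ v : Fin N → Fin N → ℂ) (i j : Fin N) :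
    HasDerivAt (fun t : ℝ => (starRingEnd ℂ) ((Φ + t • v) i j)) ((starRingEnd ℂ) (v i j)) 0 :=
  (hasLineDerivAt_entry Φ v i j).star

/-- The derivative of `Tr((Φ*Φ)²)` in the direction `v` is `2 Tr(Φ*Φ (v*Φ + Φ*v))`. -/
lemma hasLineDerivAt_quartic {N : ℕ} (Φ v : Fin N → Fin N → ℂ) :
    HasDerivAt (fun t : ℝ => ((((Matrix.of (Φ + t • v))ᴴ * Matrix.of (Φ + t • v))
        * ((Matrix.of (Φ + t • v))ᴴ * Matrix.of (Φ + t • v))).trace))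
      (2 * ((Matrix.of Φ)ᴴ * Matrix.of Φ
        * ((Matrix.of v)ᴴ * Matrix.of Φ + (Matrix.of Φ)ᴴ * Matrix.of v)).trace) 0 := by
  have h1 : ∀ i j, HasDerivAt (fun t : ℝ => Matrix.of (Φ + t • v) i j) (Matrix.of v i j) 0 :=
    hasLineDerivAt_entry Φ v
  have h2 : ∀ i j, HasDerivAt (fun t : ℝ => (Matrix.of (Φ + t • v))ᴴ i j)
      ((Matrix.of v)ᴴ i j) 0 := fun i j => hasLineDerivAt_star_entry Φ v j i
  have h3 := hasDerivAt_matrix_mul h2 h1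
  have h4 := hasDerivAt_matrix_mul h3 h3
  have h5 := HasDerivAt.fun_sum (u := Finset.univ) fun i _ => h4 i i
  have h6 : Matrix.of (Φ + (0 : ℝ) • v) = Matrix.of Φ := by simp
  rw [h6] at h5
  refine h5.congr_deriv ?_
  change Matrix.trace _ = _
  rw [Matrix.trace_add, Matrix.trace_mul_comm, two_mul]

/-- The derivative of the weight in the direction `c` times the elementary matrix at `(a,b)`.
Taking `c = 1` and `c = i` separates the two Wirtinger derivatives. -/
lemma hasLineDerivAt_lszIntegrand (N : ℕ) (E Et : Fin N → ℝ) (lam : ℝ)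
    (J K Φ : Fin N → Fin N → ℂ) (a b : Fin N) (c : ℂ) :
    HasLineDerivAt ℝ (lszIntegrand N E Et lam J K)
      ((N : ℂ) * (c * logDerivHol N E Et lam K a b Φ
        + (starRingEnd ℂ) c * logDerivAnti N E Et lam J a b Φ)
        * lszIntegrand N E Et lam J K Φ) Φ (c • eMat N a b) := by
  unfold HasLineDerivAt
  set v : Fin N → Fin N → ℂ := c • eMat N a b with hv
  have hq := (hasLineDerivAt_quartic Φ v).const_mul ((lam / 2 : ℝ) : ℂ)
  have hs : HasDerivAt (fun t : ℝ => ∑ n, ∑ m, (((E n + Et m : ℝ)) : ℂ)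
        * ((Complex.normSq ((Φ + t • v) n m) : ℝ) : ℂ))
      (∑ n, ∑ m, (((E n + Et m : ℝ)) : ℂ)
        * (v n m * (starRingEnd ℂ) (Φ n m) + Φ n m * (starRingEnd ℂ) (v n m))) 0 := by
    simp only [← Complex.mul_conj]
    refine HasDerivAt.fun_sum fun n _ => HasDerivAt.fun_sum fun m _ => ?_
    have h := ((hasLineDerivAt_entry Φ v n m).mul
      (hasLineDerivAt_star_entry Φ v n m)).const_mul (((E n + Et m : ℝ)) : ℂ)
    simpa using h
  have hJ : HasDerivAt (fun t : ℝ => ∑ m, ∑ n, J n m * (starRingEnd ℂ) ((Φ + t • v) n m))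
      (∑ m, ∑ n, J n m * (starRingEnd ℂ) (v n m)) 0 :=
    HasDerivAt.fun_sum fun m _ => HasDerivAt.fun_sum fun n _ =>
      (hasLineDerivAt_star_entry Φ v n m).const_mul _
  have hK : HasDerivAt (fun t : ℝ => ∑ m, ∑ n, K m n * (Φ + t • v) n m)
      (∑ m, ∑ n, K m n * v n m) 0 :=
    HasDerivAt.fun_sum fun m _ => HasDerivAt.fun_sum fun n _ =>
      (hasLineDerivAt_entry Φ v n m).const_mul _
  have h := (((hs.add hq).const_mul (-(N : ℂ))).add ((hJ.add hK).const_mul (N : ℂ))).cexp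
  have e0 : Φ + (0 : ℝ) • v = Φ := by simp
  refine HasDerivAt.congr_deriv h ?_
  have es : (∑ n, ∑ m, (((E n + Et m : ℝ)) : ℂ)
        * (v n m * (starRingEnd ℂ) (Φ n m) + Φ n m * (starRingEnd ℂ) (v n m)))
      = (((E a + Et b : ℝ)) : ℂ)
        * (c * (starRingEnd ℂ) (Φ a b) + Φ a b * (starRingEnd ℂ) c) := by
    rw [Finset.sum_eq_single a, Finset.sum_eq_single b]
    · simp [hv, eMat]
    · intro m _ hm; simp [hv, eMat, hm]
    · simp
    · intro n _ hn; simp [hv, eMat, hn]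
    · simp
  have eJ : (∑ m, ∑ n, J n m * (starRingEnd ℂ) (v n m)) = J a b * (starRingEnd ℂ) c := by
    rw [Finset.sum_eq_single b, Finset.sum_eq_single a]
    · simp [hv, eMat]
    · intro m _ hm; simp [hv, eMat, hm]
    · simp
    · intro n _ hn; simp [hv, eMat, hn]
    · simp
  have eK : (∑ m, ∑ n, K m n * v n m) = K b a * c := by
    rw [Finset.sum_eq_single b, Finset.sum_eq_single a]
    · simp [hv, eMat]
    · intro m _ hm; simp [hv, eMat, hm]
    · simp
    · intro n _ hn; simp [hv, eMat, hn]
    · simp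
  have hvm : Matrix.of v = Matrix.single a b c := by
    ext i j
    simp [hv, eMat, Matrix.single_apply, eq_comm]
  have eq : ((Matrix.of Φ)ᴴ * Matrix.of Φ
        * ((Matrix.of v)ᴴ * Matrix.of Φ + (Matrix.of Φ)ᴴ * Matrix.of v)).trace
      = c * ((Matrix.of Φ)ᴴ * Matrix.of Φ * (Matrix.of Φ)ᴴ) b a
        + (starRingEnd ℂ) c * (Matrix.of Φ * ((Matrix.of Φ)ᴴ * Matrix.of Φ)) a b := by
    rw [hvm, Matrix.conjTranspose_single, Matrix.mul_add, Matrix.trace_add,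
      Matrix.trace_mul_comm _ (Matrix.single b a (star c) * Matrix.of Φ), Matrix.mul_assoc,
      Matrix.trace_single_mul, ← Matrix.mul_assoc _ _ (Matrix.single a b c),
      Matrix.trace_mul_single]
    simp [mul_comm, add_comm]
  change lszIntegrand N E Et lam J K (Φ + (0 : ℝ) • v) * _ = _
  rw [e0, es, eJ, eK, eq, logDerivHol, logDerivAnti]
  push_cast
  ring

/-! ### Integration by parts -/

lemma ExpGrowth.conjTranspose {N : ℕ} (i j : Fin N) :
    ExpGrowth (fun Φ : Fin N → Fin N → ℂ => (Matrix.of Φ)ᴴ i j) :=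
  ExpGrowth.star_entry j i

lemma ExpGrowth.logDerivHol {N : ℕ} (E Et : Fin N → ℝ) (lam : ℝ) (K : Fin N → Fin N → ℂ)
    (a b : Fin N) : ExpGrowth (logDerivHol N E Et lam K a b) := by
  have hq := matrix_mul (matrix_mul (N := N) conjTranspose entry) conjTranspose b a
  have h := (((const (-(((E a + Et b : ℝ)) : ℂ))).mul (star_entry a b)).add
    ((const (-(lam : ℂ))).mul hq)).add (const (K b a))
  convert h using 1
  funext Φ
  simp only [_root_.logDerivHol]
  ring_nf
  rfl

lemma ExpGrowth.logDerivAnti {N : ℕ} (E Et : Fin N → ℝ) (lam : ℝ) (J : Fin N → Fin N → ℂ)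
    (a b : Fin N) : ExpGrowth (logDerivAnti N E Et lam J a b) := by
  have hq := matrix_mul (N := N) entry (matrix_mul conjTranspose entry) a b
  have h := (((const (-(((E a + Et b : ℝ)) : ℂ))).mul (entry a b)).add
    ((const (-(lam : ℂ))).mul hq)).add (const (J a b))
  convert h using 1
  funext Φ
  simp only [_root_.logDerivAnti]
  ring_nf
  rfl

/-- Integration by parts in the complex coordinate `Φ_{ab}`, for a function `f` with constant
Wirtinger derivatives `α = ∂f/∂Φ_{ab}` and `β = ∂f/∂conj(Φ_{ab})`. -/
lemma integral_by_parts {N : ℕ} (hN : 1 ≤ N) {E Et : Fin N → ℝ}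
    (hE : ∀ n, 0 < E n) (hEt : ∀ n, 0 < Et n) {lam : ℝ} (hlam : 0 ≤ lam)
    (J K : Fin N → Fin N → ℂ) (a b : Fin N) {f : (Fin N → Fin N → ℂ) → ℂ} (hf : ExpGrowth f)
    (α β : ℂ) (hd : ∀ (c : ℂ) (Φ : Fin N → Fin N → ℂ),
      HasLineDerivAt ℝ f (c * α + (starRingEnd ℂ) c * β) Φ (c • eMat N a b)) :
    ∫ Φ, f Φ * ((N : ℂ) * logDerivHol N E Et lam K a b Φ) * lszIntegrand N E Et lam J K Φ
        = -(α * lszZ N E Et lam J K) ∧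
    ∫ Φ, f Φ * ((N : ℂ) * logDerivAnti N E Et lam J a b Φ) * lszIntegrand N E Et lam J K Φ
        = -(β * lszZ N E Et lam J K) := by
  have hP := hf.mul ((ExpGrowth.const (N : ℂ)).mul (ExpGrowth.logDerivHol E Et lam K a b))
  have hQ := hf.mul ((ExpGrowth.const (N : ℂ)).mul (ExpGrowth.logDerivAnti E Et lam J a b))
  have iP := hP.integrable hN hE hEt hlam J K
  have iQ := hQ.integrable hN hE hEt hlam J K
  have : (volume : Measure (Fin N → ℂ)).IsAddHaarMeasure :=
    inferInstanceAs (Measure.pi fun _ => volume).IsAddHaarMeasure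
  have : (volume : Measure (Fin N → Fin N → ℂ)).IsAddHaarMeasure :=
    Measure.pi.isAddHaarMeasure (fun _ : Fin N => (volume : Measure (Fin N → ℂ)))
  have ibp : ∀ c : ℂ,
      c * (∫ Φ, f Φ * ((N : ℂ) * logDerivHol N E Et lam K a b Φ) * lszIntegrand N E Et lam J K Φ)
      + (starRingEnd ℂ) c *
        (∫ Φ, f Φ * ((N : ℂ) * logDerivAnti N E Et lam J a b Φ) * lszIntegrand N E Et lam J K Φ)
      = -((c * α + (starRingEnd ℂ) c * β) * lszZ N E Et lam J K) := by
    intro c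
    have e : ∀ Φ, f Φ * ((N : ℂ) * (c * logDerivHol N E Et lam K a b Φ
          + (starRingEnd ℂ) c * logDerivAnti N E Et lam J a b Φ) * lszIntegrand N E Et lam J K Φ)
        = c * (f Φ * ((N : ℂ) * logDerivHol N E Et lam K a b Φ) * lszIntegrand N E Et lam J K Φ)
          + (starRingEnd ℂ) c * (f Φ * ((N : ℂ) * logDerivAnti N E Et lam J a b Φ)
            * lszIntegrand N E Et lam J K Φ) := fun Φ => by ring
    have h := integral_bilinear_hasLineDerivAt_right_eq_neg_left_of_integrable
      (μ := (volume : Measure (Fin N → Fin N → ℂ))) (B := ContinuousLinearMap.mul ℝ ℂ)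
      (f := f) (f' := fun _ => c * α + (starRingEnd ℂ) c * β)
      (g := lszIntegrand N E Et lam J K)
      (g' := fun Φ => (N : ℂ) * (c * logDerivHol N E Et lam K a b Φ
          + (starRingEnd ℂ) c * logDerivAnti N E Et lam J a b Φ) * lszIntegrand N E Et lam J K Φ)
      (v := c • eMat N a b)
      ((ExpGrowth.const _).integrable hN hE hEt hlam J K)
      (by
        simp only [ContinuousLinearMap.mul_apply', e]
        exact (iP.const_mul c).add (iQ.const_mul _))
      (hf.integrable hN hE hEt hlam J K)
      (fun Φ _ => hd c Φ)
      (fun Φ _ => hasLineDerivAt_lszIntegrand N E Et lam J K Φ a b c)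
    simp only [ContinuousLinearMap.mul_apply', e] at h
    rw [integral_add (iP.const_mul c) (iQ.const_mul _), integral_const_mul, integral_const_mul,
      integral_const_mul] at h
    exact h
  have h1 := ibp 1
  have h2 := ibp Complex.I
  simp only [map_one, one_mul, Complex.conj_I] at h1 h2
  generalize (∫ Φ, f Φ * ((N : ℂ) * logDerivHol N E Et lam K a b Φ)
    * lszIntegrand N E Et lam J K Φ) = A at *
  generalize (∫ Φ, f Φ * ((N : ℂ) * logDerivAnti N E Et lam J a b Φ)
    * lszIntegrand N E Et lam J K Φ) = B at *
  have h3 : A - B = -((α - β) * lszZ N E Et lam J K) :=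
    mul_left_cancel₀ Complex.I_ne_zero (by linear_combination h2)
  constructor
  · linear_combination (1 / 2) * h1 + (1 / 2) * h3
  · linear_combination (1 / 2) * h1 - (1 / 2) * h3

lemma hasLineDerivAt_entry_eMat {N : ℕ} (k l n : Fin N) (c : ℂ) (Φ : Fin N → Fin N → ℂ) :
    HasLineDerivAt ℝ (fun Φ : Fin N → Fin N → ℂ => Φ k n)
      (c * (if k = l then 1 else 0) + (starRingEnd ℂ) c * 0) Φ (c • eMat N l n) := by
  refine HasDerivAt.congr_deriv (hasLineDerivAt_entry Φ (c • eMat N l n) k n) ?_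
  simp [eMat]

lemma hasLineDerivAt_star_entry_eMat {N : ℕ} (k l n : Fin N) (c : ℂ) (Φ : Fin N → Fin N → ℂ) :
    HasLineDerivAt ℝ (fun Φ : Fin N → Fin N → ℂ => (starRingEnd ℂ) (Φ l n))
      (c * 0 + (starRingEnd ℂ) c * (if k = l then 1 else 0)) Φ (c • eMat N k n) := by
  refine HasDerivAt.congr_deriv (hasLineDerivAt_star_entry Φ (c • eMat N k n) l n) ?_
  by_cases h : k = l <;> simp [eMat, h, eq_comm]

/-- Pointwise form of the Ward identity: in `Φ ∂/∂Φ - conj Φ ∂/∂(conj Φ)`, contracted over the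
second index, the quartic terms are both `(ΦΦ*ΦΦ*)_{kl}` and the `Ẽ` terms agree, so both cancel. -/
lemma ward_pointwise (N : ℕ) (E Et : Fin N → ℝ) (lam : ℝ) (k l : Fin N)
    (J K Φ : Fin N → Fin N → ℂ) :
    ∑ n, ((((E k - E l : ℝ)) : ℂ) * ((N : ℂ) * Φ k n * ((N : ℂ) * (starRingEnd ℂ) (Φ l n)))
      + (N : ℂ) * K n l * ((N : ℂ) * Φ k n)
      - (N : ℂ) * J k n * ((N : ℂ) * (starRingEnd ℂ) (Φ l n)))
    = ∑ n, ((N : ℂ) * (Φ k n * ((N : ℂ) * logDerivHol N E Et lam K l n Φ))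
        - (N : ℂ) * ((starRingEnd ℂ) (Φ l n) * ((N : ℂ) * logDerivAnti N E Et lam J k n Φ))) := by
  have h1 : ∑ n, Φ k n * ((Matrix.of Φ)ᴴ * Matrix.of Φ * (Matrix.of Φ)ᴴ) n l
      = (Matrix.of Φ * ((Matrix.of Φ)ᴴ * Matrix.of Φ * (Matrix.of Φ)ᴴ)) k l := by
    simp [Matrix.mul_apply (M := Matrix.of Φ)]
  have h2 : ∑ n, (starRingEnd ℂ) (Φ l n) * (Matrix.of Φ * ((Matrix.of Φ)ᴴ * Matrix.of Φ)) k n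
      = (Matrix.of Φ * ((Matrix.of Φ)ᴴ * Matrix.of Φ * (Matrix.of Φ)ᴴ)) k l := by
    rw [← Matrix.mul_assoc (Matrix.of Φ) _ (Matrix.of Φ)ᴴ, Matrix.mul_apply (N := (Matrix.of Φ)ᴴ)]
    exact Finset.sum_congr rfl fun n _ => mul_comm _ _
  have h3 : ∑ n, ((N : ℂ) ^ 2 * (lam : ℂ)
        * (Φ k n * ((Matrix.of Φ)ᴴ * Matrix.of Φ * (Matrix.of Φ)ᴴ) n l
        - (starRingEnd ℂ) (Φ l n) * (Matrix.of Φ * ((Matrix.of Φ)ᴴ * Matrix.of Φ)) k n)) = 0 := by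
    rw [← Finset.mul_sum, Finset.sum_sub_distrib, h1, h2, sub_self, mul_zero]
  rw [← sub_eq_zero, ← Finset.sum_sub_distrib, ← h3]
  refine Finset.sum_congr rfl fun n _ => ?_
  simp only [logDerivHol, logDerivAnti]
  push_cast
  ring

/-- The Ward identity of the LSZ model:
`Σ_n [(E_k − E_l)·∂²Z/∂J_{ln}∂K_{nk} + N·K_{nl}·∂Z/∂K_{nk} − N·J_{kn}·∂Z/∂J_{ln}] = 0`. -/
theorem lsz_ward_identity
    (N : ℕ) (hN : 1 ≤ N) (E Et : Fin N → ℝ)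
    (hE : ∀ n, 0 < E n) (hEt : ∀ n, 0 < Et n) (lam : ℝ) (hlam : 0 ≤ lam)
    (k l : Fin N) (J K : Fin N → Fin N → ℂ) :
    ∑ n, ((((E k - E l : ℝ)) : ℂ) * dJ N l n (dK N n k (lszZ N E Et lam)) J K
      + (N : ℂ) * K n l * dK N n k (lszZ N E Et lam) J K
      - (N : ℂ) * J k n * dJ N l n (lszZ N E Et lam) J K) = 0 := by
  have hent := fun n => ExpGrowth.entry (N := N) k n
  have hst := fun n => ExpGrowth.star_entry (N := N) l n
  have cN := ExpGrowth.const (N := N) (N : ℂ)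
  have i1 := fun n => ((cN.mul (hent n)).mul (cN.mul (hst n))).integrable hN hE hEt hlam J K
  have i2 := fun n => (cN.mul (hent n)).integrable hN hE hEt hlam J K
  have i3 := fun n => (cN.mul (hst n)).integrable hN hE hEt hlam J K
  have i4 := fun n => ((hent n).mul
    (cN.mul (ExpGrowth.logDerivHol E Et lam K l n))).integrable hN hE hEt hlam J K
  have i5 := fun n => ((hst n).mul
    (cN.mul (ExpGrowth.logDerivAnti E Et lam J k n))).integrable hN hE hEt hlam J K
  simp only [dJ_dK_lszZ hN hE hEt hlam, dK_lszZ hN hE hEt hlam, dJ_lszZ hN hE hEt hlam]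
  calc _ = ∑ n, ∫ Φ, ((((E k - E l : ℝ)) : ℂ)
          * ((N : ℂ) * Φ k n * ((N : ℂ) * (starRingEnd ℂ) (Φ l n)))
        + (N : ℂ) * K n l * ((N : ℂ) * Φ k n)
        - (N : ℂ) * J k n * ((N : ℂ) * (starRingEnd ℂ) (Φ l n)))
          * lszIntegrand N E Et lam J K Φ := by
        refine Finset.sum_congr rfl fun n _ => ?_
        rw [← integral_const_mul, ← integral_const_mul, ← integral_const_mul,
          ← integral_add ((i1 n).const_mul _) ((i2 n).const_mul _),
          ← integral_sub ?_ ((i3 n).const_mul _)]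
        rotate_left
        · exact ((i1 n).const_mul _).add ((i2 n).const_mul _)
        congr 1
        funext Φ
        ring
    _ = ∫ Φ, (∑ n, ((((E k - E l : ℝ)) : ℂ)
          * ((N : ℂ) * Φ k n * ((N : ℂ) * (starRingEnd ℂ) (Φ l n)))
        + (N : ℂ) * K n l * ((N : ℂ) * Φ k n)
        - (N : ℂ) * J k n * ((N : ℂ) * (starRingEnd ℂ) (Φ l n))))
          * lszIntegrand N E Et lam J K Φ := by
        simp only [Finset.sum_mul]
        refine (integral_finsetSum _ fun n _ => ?_).symm
        refine ((((i1 n).const_mul (((E k - E l : ℝ)) : ℂ)).add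
          ((i2 n).const_mul ((N : ℂ) * K n l))).sub
            ((i3 n).const_mul ((N : ℂ) * J k n))).congr (Filter.Eventually.of_forall fun Φ => ?_)
        simp only [Pi.add_apply, Pi.sub_apply]
        ring
    _ = ∫ Φ, ∑ n, ((N : ℂ) * (Φ k n * ((N : ℂ) * logDerivHol N E Et lam K l n Φ)
            * lszIntegrand N E Et lam J K Φ)
        - (N : ℂ) * ((starRingEnd ℂ) (Φ l n) * ((N : ℂ) * logDerivAnti N E Et lam J k n Φ)
            * lszIntegrand N E Et lam J K Φ)) := by
        congr 1
        funext Φ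
        rw [ward_pointwise, Finset.sum_mul]
        exact Finset.sum_congr rfl fun n _ => by ring
    _ = 0 := by
        rw [integral_finsetSum]
        rotate_left
        · exact fun n _ => ((i4 n).const_mul _).sub ((i5 n).const_mul _)
        refine Finset.sum_eq_zero fun n _ => ?_
        rw [integral_sub ((i4 n).const_mul _) ((i5 n).const_mul _), integral_const_mul,
          integral_const_mul,
          (integral_by_parts hN hE hEt hlam J K l n (hent n) _ _
            (hasLineDerivAt_entry_eMat k l n)).1,
          (integral_by_parts hN hE hEt hlam J K k n (hst n) _ _
            (hasLineDerivAt_star_entry_eMat k l n)).2, sub_self]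
end

section
/- For every coupling λ ≥ 0 and every p ∈ {1,…,N}, the logarithm of the LSZ partition function satisfies −∂/∂E_p [log Z(0,0)] = (1/N)·Σ_{n=1}^N ∂²(log Z)/∂J_{pn}∂K_{np}(0,0). Equivalently, the correlator Ω_p := (1/N²)·Σ_{n=1}^N ∂²(log Z)/∂J_{pn}∂K_{np}(0,0) is created from the free energy by the boundary creation operator: Ω_p = −(1/N)·∂ log Z(0,0)/∂E_p. -/
/-!
Writing `w = exp (-N S)`, both sides are moments of the weight `w`. Differentiating `Z(0,0)` in `E_p`
brings down `-N Σ_n |Φ_{pn}|²`, while `∂/∂J_{pn} ∂/∂K_{np}` brings down `N² |Φ_{pn}|²`; the additional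
term of the second derivative of the logarithm is a product of one-point functions, and these vanish
because `w` is even (`integral_lszWeight_mul_entry`).

Every derivative is taken under the integral sign by one lemma on exponential tilts
(`hasDerivAt_integral_mul_cexp`): `s ↦ ∫ f exp (s h)` is holomorphic for `‖s‖ < ε` as soon as
`‖f‖ exp (ε ‖h‖)` is integrable. The required integrability reduces to that of `w` itself
(`integrable_lszWeight`, a comparison with a product of Gaussians, as the quartic term is
nonnegative) with `E_p` replaced by `E_p / 2`: the part of the quadratic term gained this way absorbs
any exponential of a linear function of `Φ_{pn}`.
Finally `Z(0,0)` is a positive real number, so `log` is holomorphic around it.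
-/

open MeasureTheory Matrix

/-! ### Differentiation under the integral sign -/

/-- Differentiation under the integral sign for an exponential tilt. -/
lemma hasDerivAt_integral_mul_cexp {α : Type*} [MeasurableSpace α] {μ : Measure α} {f h : α → ℂ}
    (hf : AEStronglyMeasurable f μ) (hh : AEStronglyMeasurable h μ) {ε : ℝ}
    (hint : Integrable (fun x => ‖f x‖ * Real.exp (ε * ‖h x‖)) μ) {s : ℂ} (hs : ‖s‖ < ε) :
    HasDerivAt (fun z : ℂ => ∫ x, f x * Complex.exp (z * h x) ∂μ)
      (∫ x, f x * (h x * Complex.exp (s * h x)) ∂μ) s := by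
  obtain ⟨δ, hδ, hδs⟩ : ∃ δ : ℝ, 0 < δ ∧ ‖s‖ + 2 * δ = ε :=
    ⟨(ε - ‖s‖) / 2, by linarith, by ring⟩
  have hexp : ∀ z : ℂ, AEStronglyMeasurable (fun x => Complex.exp (z * h x)) μ := fun z =>
    Complex.continuous_exp.comp_aestronglyMeasurable (hh.const_mul z)
  have hnorm : ∀ (z : ℂ) (x : α), ‖Complex.exp (z * h x)‖ ≤ Real.exp (‖z‖ * ‖h x‖) := by
    intro z x
    simpa using Complex.norm_exp_le_exp_norm (z * h x)
  refine (hasDerivAt_integral_of_dominated_loc_of_deriv_le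
    (F := fun z x => f x * Complex.exp (z * h x))
    (F' := fun z x => f x * (h x * Complex.exp (z * h x)))
    (bound := fun x => δ⁻¹ * (‖f x‖ * Real.exp (ε * ‖h x‖)))
    (Metric.ball_mem_nhds s hδ) (Filter.Eventually.of_forall fun z => hf.mul (hexp z)) ?_
    (hf.mul (hh.mul (hexp s))) ?_ (hint.const_mul _) ?_).2
  · refine hint.mono' (hf.mul (hexp s)) (Filter.Eventually.of_forall fun x => ?_)
    rw [norm_mul]
    gcongr
    exact (hnorm s x).trans (by gcongr)
  · refine Filter.Eventually.of_forall fun x z hz => ?_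
    have hz' : ‖z‖ ≤ ‖s‖ + δ := by
      have h1 : ‖z - s‖ < δ := by simpa [dist_eq_norm] using hz
      have h2 := norm_add_le s (z - s)
      rw [add_sub_cancel] at h2
      linarith
    have h1 : δ * ‖h x‖ ≤ Real.exp (δ * ‖h x‖) := by
      linarith [Real.add_one_le_exp (δ * ‖h x‖)]
    have h2 : ‖h x‖ ≤ δ⁻¹ * Real.exp (δ * ‖h x‖) := by
      rwa [← div_eq_inv_mul, le_div_iff₀ hδ, mul_comm]
    calc ‖f x * (h x * Complex.exp (z * h x))‖
        = ‖f x‖ * (‖h x‖ * ‖Complex.exp (z * h x)‖) := by rw [norm_mul, norm_mul]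
      _ ≤ ‖f x‖ * ((δ⁻¹ * Real.exp (δ * ‖h x‖)) * Real.exp ((‖s‖ + δ) * ‖h x‖)) := by
          gcongr
          exact (hnorm z x).trans (by gcongr)
      _ = δ⁻¹ * (‖f x‖ * Real.exp (ε * ‖h x‖)) := by
          have : ε * ‖h x‖ = δ * ‖h x‖ + (‖s‖ + δ) * ‖h x‖ := by rw [← hδs]; ring
          rw [this, Real.exp_add]; ring
  · refine Filter.Eventually.of_forall fun x z _ => ?_
    have h1 : HasDerivAt (fun z : ℂ => z * h x) (h x) z := by
      simpa using (hasDerivAt_id z).mul_const (h x)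
    exact (h1.cexp.const_mul (f x)).congr_deriv (by ring)

/-! ### The Boltzmann weight -/

/-- The Boltzmann weight `exp (-N S(Φ))`, i.e. the integrand at vanishing sources. -/
noncomputable def lszWeight (N : ℕ) (E Et : Fin N → ℝ) (lam : ℝ) (Φ : Fin N → Fin N → ℂ) : ℂ :=
  Complex.exp (-(N : ℂ) * lszAction N E Et lam Φ)

/-- The action is real and bounded below by its quadratic part, as `Tr((Φ*Φ)²) ≥ 0`. -/
lemma lszAction_real (N : ℕ) (E Et : Fin N → ℝ) (lam : ℝ) (hlam : 0 ≤ lam)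
    (Φ : Fin N → Fin N → ℂ) :
    ∃ q : ℝ, lszAction N E Et lam Φ = (q : ℂ) ∧
      ∑ n, ∑ m, (E n + Et m) * ‖Φ n m‖ ^ 2 ≤ q := by
  have hT : ∃ r : ℝ, 0 ≤ r ∧
      (((Matrix.of Φ)ᴴ * Matrix.of Φ) * ((Matrix.of Φ)ᴴ * Matrix.of Φ)).trace = (r : ℂ) := by
    set A := (Matrix.of Φ)ᴴ * Matrix.of Φ with hA
    have hAH : Aᴴ = A := by simp [hA]
    refine ⟨∑ i, ∑ j, ‖A j i‖ ^ 2, by positivity, ?_⟩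
    nth_rewrite 1 [← hAH]
    simp only [Matrix.trace, Matrix.diag, Matrix.mul_apply, Matrix.conjTranspose_apply,
      Complex.ofReal_sum]
    refine Finset.sum_congr rfl fun i _ => Finset.sum_congr rfl fun j _ => ?_
    simpa using Complex.conj_mul' (A j i)
  obtain ⟨r, hr, hT⟩ := hT
  refine ⟨∑ n, ∑ m, (E n + Et m) * ‖Φ n m‖ ^ 2 + lam / 2 * r, ?_, ?_⟩
  · rw [lszAction, hT]
    simp [Complex.normSq_eq_norm_sq]
  · have : 0 ≤ lam / 2 * r := by positivity
    linarith

lemma continuous_lszWeight (N : ℕ) (E Et : Fin N → ℝ) (lam : ℝ) :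
    Continuous (lszWeight N E Et lam) := by
  have h1 : Continuous fun Φ : Fin N → Fin N → ℂ => Matrix.of Φ := continuous_id
  have h2 : Continuous fun Φ : Fin N → Fin N → ℂ => (Matrix.of Φ)ᴴ * Matrix.of Φ :=
    h1.matrix_conjTranspose.matrix_mul h1
  have h3 := (h2.matrix_mul h2).matrix_trace
  have h4 : Continuous (lszAction N E Et lam) := by
    unfold lszAction
    refine Continuous.add ?_ (continuous_const.mul h3)
    refine continuous_finsetSum _ fun n _ => continuous_finsetSum _ fun m _ => ?_
    refine continuous_const.mul (Complex.continuous_ofReal.comp ?_)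
    exact Complex.continuous_normSq.comp (continuous_apply_apply n m)
  exact Complex.continuous_exp.comp (continuous_const.mul h4)

lemma integrable_lszWeight (N : ℕ) (hN : 1 ≤ N) (E Et : Fin N → ℝ)
    (hE : ∀ n, 0 < E n) (hEt : ∀ n, 0 < Et n) (lam : ℝ) (hlam : 0 ≤ lam) :
    Integrable (lszWeight N E Et lam) := by
  have hNpos : (0 : ℝ) < N := by exact_mod_cast hN
  have hg : ∀ n m, Integrable (fun z : ℂ => Real.exp (-((N : ℝ) * (E n + Et m)) * ‖z‖ ^ 2)) := by
    intro n m
    have hb : 0 < (N : ℝ) * (E n + Et m) := mul_pos hNpos (add_pos (hE n) (hEt m))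
    have := (GaussianFourier.integrable_cexp_neg_mul_sq_norm_add
      (b := (((N : ℝ) * (E n + Et m) : ℝ) : ℂ)) (by simpa using hb) 0 (0 : ℂ)).norm
    refine this.congr (Filter.Eventually.of_forall fun z => ?_)
    simp only [Complex.norm_exp]
    congr 1
    have : (-(((N : ℝ) * (E n + Et m) : ℝ) : ℂ) * ((‖z‖ : ℝ) : ℂ) ^ 2)
        = ((-((N : ℝ) * (E n + Et m)) * ‖z‖ ^ 2 : ℝ) : ℂ) := by push_cast; ring
    rw [this]
    simp [-Complex.ofReal_mul, -Complex.ofReal_neg]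
  have hG : Integrable (fun Φ : Fin N → Fin N → ℂ =>
      ∏ n, ∏ m, Real.exp (-((N : ℝ) * (E n + Et m)) * ‖Φ n m‖ ^ 2)) :=
    Integrable.fintype_prod
      (f := fun n (v : Fin N → ℂ) => ∏ m, Real.exp (-((N : ℝ) * (E n + Et m)) * ‖v m‖ ^ 2))
      fun n => Integrable.fintype_prod
        (f := fun m (z : ℂ) => Real.exp (-((N : ℝ) * (E n + Et m)) * ‖z‖ ^ 2)) fun m => hg n m
  refine hG.mono' (continuous_lszWeight N E Et lam).aestronglyMeasurable
    (Filter.Eventually.of_forall fun Φ => ?_)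
  obtain ⟨q, hq, hle⟩ := lszAction_real N E Et lam hlam Φ
  rw [lszWeight, hq, Complex.norm_exp]
  simp only [← Real.exp_sum]
  apply Real.exp_le_exp.mpr
  have h1 : (-(N : ℂ) * (q : ℂ)).re = -(N : ℝ) * q := by simp
  have h2 : ∑ n, ∑ m, -((N : ℝ) * (E n + Et m)) * ‖Φ n m‖ ^ 2
      = -(N : ℝ) * ∑ n, ∑ m, (E n + Et m) * ‖Φ n m‖ ^ 2 := by
    simp only [Finset.mul_sum]
    exact Finset.sum_congr rfl fun n _ => Finset.sum_congr rfl fun m _ => by ring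
  rw [h1, h2]
  nlinarith

lemma integral_lszWeight_mem_slitPlane (N : ℕ) (hN : 1 ≤ N) (E Et : Fin N → ℝ)
    (hE : ∀ n, 0 < E n) (hEt : ∀ n, 0 < Et n) (lam : ℝ) (hlam : 0 ≤ lam) :
    (∫ Φ, lszWeight N E Et lam Φ) ∈ Complex.slitPlane := by
  choose q hq _ using lszAction_real N E Et lam hlam
  have hw : lszWeight N E Et lam = fun Φ => ((Real.exp (-(N : ℝ) * q Φ) : ℝ) : ℂ) := by
    funext Φ
    rw [lszWeight, hq]
    push_cast
    rfl
  have hi : Integrable fun Φ => Real.exp (-(N : ℝ) * q Φ) := by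
    have := (integrable_lszWeight N hN E Et hE hEt lam hlam).re
    rw [hw] at this
    simpa only [RCLike.re_to_complex, Complex.ofReal_re] using this
  have : (volume : Measure (Fin N → Fin N → ℂ)).IsOpenPosMeasure :=
    Measure.pi.isOpenPosMeasure (fun _ => (volume : Measure (Fin N → ℂ)))
  rw [hw, integral_complex_ofReal]
  exact Complex.ofReal_mem_slitPlane.mpr (integral_exp_pos hi)

/-- The one-point function vanishes, the weight being even. -/
lemma integral_lszWeight_mul_entry (N : ℕ) (E Et : Fin N → ℝ) (lam : ℝ) (p n : Fin N) :
    ∫ Φ : Fin N → Fin N → ℂ, lszWeight N E Et lam Φ * ((N : ℂ) * Φ p n) = 0 := by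
  have heven : ∀ Φ, lszWeight N E Et lam (-Φ) = lszWeight N E Et lam Φ := by
    intro Φ
    have : Matrix.of (-Φ) = -Matrix.of Φ := rfl
    simp only [lszWeight, lszAction, this, Pi.neg_apply, Complex.normSq_neg,
      Matrix.conjTranspose_neg, Matrix.neg_mul, Matrix.mul_neg, neg_neg]
  have : (volume : Measure (Fin N → Fin N → ℂ)).IsNegInvariant :=
    Measure.pi.isNegInvariant (fun _ => (volume : Measure (Fin N → ℂ)))
  have h := integral_neg_eq_self
    (fun Φ : Fin N → Fin N → ℂ => lszWeight N E Et lam Φ * ((N : ℂ) * Φ p n)) volume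
  simp only [heven, Pi.neg_apply, mul_neg, integral_neg] at h
  exact self_eq_neg.mp h.symm

/-! ### Dependence of the integrand on `E_p` and on the sources -/

/-- Shifting `E_p` tilts the weight by the `p`-th row of the quadratic term. -/
lemma lszWeight_update (N : ℕ) (E Et : Fin N → ℝ) (lam : ℝ) (p : Fin N) (s : ℝ)
    (Φ : Fin N → Fin N → ℂ) :
    lszWeight N (Function.update E p s) Et lam Φ = lszWeight N E Et lam Φ *
      Complex.exp (((s - E p : ℝ) : ℂ) * (-(N : ℂ) * ∑ m, ((‖Φ p m‖ ^ 2 : ℝ) : ℂ))) := by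
  have key : lszAction N (Function.update E p s) Et lam Φ = lszAction N E Et lam Φ
      + ((s - E p : ℝ) : ℂ) * ∑ m, ((‖Φ p m‖ ^ 2 : ℝ) : ℂ) := by
    have h : ∀ n, ∑ m, (((Function.update E p s n + Et m : ℝ)) : ℂ)
          * ((Complex.normSq (Φ n m) : ℝ) : ℂ)
        = ∑ m, (((E n + Et m : ℝ)) : ℂ) * ((Complex.normSq (Φ n m) : ℝ) : ℂ)
          + if n = p then ((s - E p : ℝ) : ℂ) * ∑ m, ((‖Φ p m‖ ^ 2 : ℝ) : ℂ) else 0 := by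
      intro n
      split_ifs with hn
      · subst hn
        rw [Finset.mul_sum, ← Finset.sum_add_distrib]
        refine Finset.sum_congr rfl fun m _ => ?_
        rw [Function.update_self, Complex.normSq_eq_norm_sq]
        push_cast
        ring
      · simp [Function.update_of_ne hn]
    simp only [lszAction, h, Finset.sum_add_distrib, Finset.sum_ite_eq', Finset.mem_univ, if_true]
    ring
  rw [lszWeight, lszWeight, key, ← Complex.exp_add]
  congr 1
  ring

lemma lszIntegrand_zero (N : ℕ) (E Et : Fin N → ℝ) (lam : ℝ) (Φ : Fin N → Fin N → ℂ) :
    lszIntegrand N E Et lam 0 0 Φ = lszWeight N E Et lam Φ := by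
  simp [lszIntegrand, lszWeight]

lemma lszIntegrand_sources (N : ℕ) (E Et : Fin N → ℝ) (lam : ℝ) (p n : Fin N) (t s : ℂ)
    (Φ : Fin N → Fin N → ℂ) :
    lszIntegrand N E Et lam (0 + t • eMat N p n) (0 + s • eMat N n p) Φ =
      lszWeight N E Et lam Φ * Complex.exp (t * ((N : ℂ) * (starRingEnd ℂ) (Φ p n)))
        * Complex.exp (s * ((N : ℂ) * Φ p n)) := by
  have hJ : ∑ m, ∑ k, (0 + t • eMat N p n) k m * (starRingEnd ℂ) (Φ k m)
      = t * (starRingEnd ℂ) (Φ p n) := by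
    rw [Finset.sum_eq_single n, Finset.sum_eq_single p] <;> simp +contextual [eMat]
  have hK : ∑ m, ∑ k, (0 + s • eMat N n p) m k * Φ k m = s * Φ p n := by
    rw [Finset.sum_eq_single n, Finset.sum_eq_single p] <;> simp +contextual [eMat]
  rw [lszIntegrand, hJ, hK, lszWeight, ← Complex.exp_add, ← Complex.exp_add]
  congr 1
  ring

/-! ### Integrability of tilted weights -/

/-- The weight tilted by half of the `p`-th row of its `E`-part is still integrable. -/
lemma integrable_lszWeight_tilt (N : ℕ) (hN : 1 ≤ N) (E Et : Fin N → ℝ)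
    (hE : ∀ n, 0 < E n) (hEt : ∀ n, 0 < Et n) (lam : ℝ) (hlam : 0 ≤ lam) (p : Fin N) :
    Integrable fun Φ : Fin N → Fin N → ℂ => ‖lszWeight N E Et lam Φ‖ *
      Real.exp (E p / 2 * ((N : ℝ) * ∑ m, ‖Φ p m‖ ^ 2)) := by
  have hE' : ∀ n, 0 < Function.update E p (E p / 2) n := by
    intro n
    rcases eq_or_ne n p with rfl | hn
    · simpa using half_pos (hE n)
    · simpa [Function.update_of_ne hn] using hE n
  refine (integrable_lszWeight N hN _ Et hE' hEt lam hlam).norm.congr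
    (Filter.Eventually.of_forall fun Φ => ?_)
  simp only [lszWeight_update, norm_mul, Complex.norm_exp]
  congr 2
  have : ((E p / 2 - E p : ℝ) : ℂ) * (-(N : ℂ) * ∑ m, ((‖Φ p m‖ ^ 2 : ℝ) : ℂ))
      = ((E p / 2 * ((N : ℝ) * ∑ m, ‖Φ p m‖ ^ 2) : ℝ) : ℂ) := by
    push_cast
    ring
  rw [this, Complex.ofReal_re]

/-- By `c r ≤ a r² + c² / (4 a)`, exponentials of a single entry are absorbed by the tilt of
`integrable_lszWeight_tilt`. -/
lemma integrable_lszWeight_exp (N : ℕ) (hN : 1 ≤ N) (E Et : Fin N → ℝ)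
    (hE : ∀ n, 0 < E n) (hEt : ∀ n, 0 < Et n) (lam : ℝ) (hlam : 0 ≤ lam) (p n : Fin N) (c : ℝ) :
    Integrable fun Φ : Fin N → Fin N → ℂ => ‖lszWeight N E Et lam Φ‖ *
      Real.exp (c * ‖Φ p n‖) := by
  have hNpos : (0 : ℝ) < N := by exact_mod_cast hN
  set a : ℝ := E p / 2 * N with ha
  have hapos : 0 < a := mul_pos (half_pos (hE p)) hNpos
  have hw := continuous_lszWeight N E Et lam
  have hc : Continuous fun Φ : Fin N → Fin N → ℂ =>
      ‖lszWeight N E Et lam Φ‖ * Real.exp (c * ‖Φ p n‖) := by fun_prop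
  refine ((integrable_lszWeight_tilt N hN E Et hE hEt lam hlam p).const_mul
    (Real.exp (c ^ 2 / (4 * a)))).mono' hc.aestronglyMeasurable
    (Filter.Eventually.of_forall fun Φ => ?_)
  rw [Real.norm_of_nonneg (by positivity), mul_left_comm, ← Real.exp_add]
  gcongr
  have h1 : ‖Φ p n‖ ^ 2 ≤ ∑ m, ‖Φ p m‖ ^ 2 :=
    Finset.single_le_sum (f := fun m => ‖Φ p m‖ ^ 2) (fun _ _ => by positivity)
      (Finset.mem_univ n)
  have h2 : E p / 2 * ((N : ℝ) * ∑ m, ‖Φ p m‖ ^ 2) = a * ∑ m, ‖Φ p m‖ ^ 2 := by rw [ha]; ring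
  have h3 : c ^ 2 / (4 * a) + a * ‖Φ p n‖ ^ 2 - c * ‖Φ p n‖
      = (2 * a * ‖Φ p n‖ - c) ^ 2 / (4 * a) := by field_simp; ring
  have h4 : 0 ≤ (2 * a * ‖Φ p n‖ - c) ^ 2 / (4 * a) := by positivity
  have h5 := mul_le_mul_of_nonneg_left h1 hapos.le
  rw [h2]
  linarith

/-! ### Derivatives of the free energy -/

/-- The free-energy side: `∂ log Z(0,0) / ∂E_p`. -/
lemma deriv_log_lszZ_E (N : ℕ) (hN : 1 ≤ N) (E Et : Fin N → ℝ)
    (hE : ∀ n, 0 < E n) (hEt : ∀ n, 0 < Et n) (lam : ℝ) (hlam : 0 ≤ lam) (p : Fin N) :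
    deriv (fun s : ℝ => Complex.log (lszZ N (Function.update E p s) Et lam 0 0)) (E p)
      = (∫ Φ : Fin N → Fin N → ℂ, lszWeight N E Et lam Φ *
          (-(N : ℂ) * ∑ m, ((‖Φ p m‖ ^ 2 : ℝ) : ℂ))) / ∫ Φ, lszWeight N E Et lam Φ := by
  have hh : Continuous fun Φ : Fin N → Fin N → ℂ =>
      -(N : ℂ) * ∑ m, ((‖Φ p m‖ ^ 2 : ℝ) : ℂ) := by fun_prop
  have hint : Integrable fun Φ : Fin N → Fin N → ℂ => ‖lszWeight N E Et lam Φ‖ *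
      Real.exp (E p / 2 * ‖-(N : ℂ) * ∑ m, ((‖Φ p m‖ ^ 2 : ℝ) : ℂ)‖) := by
    refine (integrable_lszWeight_tilt N hN E Et hE hEt lam hlam p).congr
      (Filter.Eventually.of_forall fun Φ => ?_)
    have h0 : (0 : ℝ) ≤ ∑ m, ‖Φ p m‖ ^ 2 := by positivity
    have : ‖-(N : ℂ) * ∑ m, ((‖Φ p m‖ ^ 2 : ℝ) : ℂ)‖ = (N : ℝ) * ∑ m, ‖Φ p m‖ ^ 2 := by
      rw [norm_mul, norm_neg, Complex.norm_natCast, ← Complex.ofReal_sum, Complex.norm_real,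
        Real.norm_of_nonneg h0]
    simp only [this]
  have hd := hasDerivAt_integral_mul_cexp (s := 0)
    (continuous_lszWeight N E Et lam).aestronglyMeasurable hh.aestronglyMeasurable hint
    (by simpa using half_pos (hE p))
  have hsub : HasDerivAt (fun s : ℝ => ((s - E p : ℝ) : ℂ)) 1 (E p) := by
    simpa using ((hasDerivAt_id (E p)).sub_const (E p)).ofReal_comp
  have hd' := HasDerivAt.comp_of_eq (E p) hd hsub (by simp)
  have hZ : (fun s : ℝ => lszZ N (Function.update E p s) Et lam 0 0)
      = (fun z : ℂ => ∫ Φ : Fin N → Fin N → ℂ, lszWeight N E Et lam Φ *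
          Complex.exp (z * (-(N : ℂ) * ∑ m, ((‖Φ p m‖ ^ 2 : ℝ) : ℂ))))
        ∘ (fun s : ℝ => ((s - E p : ℝ) : ℂ)) := by
    funext s
    simp only [lszZ, lszIntegrand_zero, lszWeight_update, Function.comp_apply]
  rw [← hZ] at hd'
  have hZ0 : lszZ N (Function.update E p (E p)) Et lam 0 0 = ∫ Φ, lszWeight N E Et lam Φ := by
    simp only [lszZ, lszIntegrand_zero, Function.update_eq_self]
  have hlog := hd'.clog_real (by
    rw [hZ0]
    exact integral_lszWeight_mem_slitPlane N hN E Et hE hEt lam hlam)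
  rw [hlog.deriv, hZ0]
  simp

/-- The correlator side: the two-point function, its disconnected part being zero. -/
lemma dJ_dK_log_lszZ (N : ℕ) (hN : 1 ≤ N) (E Et : Fin N → ℝ)
    (hE : ∀ n, 0 < E n) (hEt : ∀ n, 0 < Et n) (lam : ℝ) (hlam : 0 ≤ lam) (p n : Fin N) :
    dJ N p n (dK N n p (fun J K => Complex.log (lszZ N E Et lam J K))) 0 0
      = (∫ Φ : Fin N → Fin N → ℂ, lszWeight N E Et lam Φ *
          ((N : ℂ) ^ 2 * ((‖Φ p n‖ ^ 2 : ℝ) : ℂ))) / ∫ Φ, lszWeight N E Et lam Φ := by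
  set w := lszWeight N E Et lam with hw_def
  have hw : Continuous w := continuous_lszWeight N E Et lam
  have hφ : Continuous fun Φ : Fin N → Fin N → ℂ => (N : ℂ) * Φ p n := by fun_prop
  have hφc : Continuous fun Φ : Fin N → Fin N → ℂ => (N : ℂ) * (starRingEnd ℂ) (Φ p n) :=
    continuous_const.mul (Complex.continuous_conj.comp (continuous_apply_apply p n))
  have hI := integrable_lszWeight_exp N hN E Et hE hEt lam hlam p n
  -- `A t = Z(t e_{pn}, 0)` and `B t = ∂Z/∂K_{np}(t e_{pn}, 0)`.
  set A : ℂ → ℂ := fun t => ∫ Φ : Fin N → Fin N → ℂ,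
    w Φ * Complex.exp (t * ((N : ℂ) * (starRingEnd ℂ) (Φ p n))) with hA_def
  set B : ℂ → ℂ := fun t => ∫ Φ : Fin N → Fin N → ℂ,
    (w Φ * ((N : ℂ) * Φ p n)) * Complex.exp (t * ((N : ℂ) * (starRingEnd ℂ) (Φ p n))) with hB_def
  have hA : HasDerivAt A _ 0 := hasDerivAt_integral_mul_cexp (s := 0) (ε := 1)
    hw.aestronglyMeasurable hφc.aestronglyMeasurable
    (by simpa using hI N) (by simp)
  have hB : HasDerivAt B _ 0 := hasDerivAt_integral_mul_cexp (s := 0) (ε := 1)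
    (f := fun Φ => w Φ * ((N : ℂ) * Φ p n))
    (hw.mul hφ).aestronglyMeasurable hφc.aestronglyMeasurable
    (by
      have hc : Continuous fun Φ : Fin N → Fin N → ℂ => ‖w Φ * ((N : ℂ) * Φ p n)‖ *
          Real.exp (1 * ‖(N : ℂ) * (starRingEnd ℂ) (Φ p n)‖) := by fun_prop
      refine (hI (2 * N)).mono' hc.aestronglyMeasurable
        (Filter.Eventually.of_forall fun Φ => ?_)
      rw [Real.norm_of_nonneg (by positivity)]
      simp only [norm_mul, Complex.norm_natCast, Complex.norm_conj, one_mul]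
      have h1 : (N : ℝ) * ‖Φ p n‖ ≤ Real.exp (N * ‖Φ p n‖) := by
        linarith [Real.add_one_le_exp ((N : ℝ) * ‖Φ p n‖)]
      have h2 : 2 * (N : ℝ) * ‖Φ p n‖ = N * ‖Φ p n‖ + N * ‖Φ p n‖ := by ring
      rw [h2, Real.exp_add, mul_assoc]
      gcongr) (by simp)
  have hA0 : A 0 = ∫ Φ, w Φ := by simp [hA_def]
  have hB0 : B 0 = 0 := by
    simpa [hB_def] using integral_lszWeight_mul_entry N E Et lam p n
  have hslit : A 0 ∈ Complex.slitPlane := by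
    rw [hA0]
    exact integral_lszWeight_mem_slitPlane N hN E Et hE hEt lam hlam
  have hinner : ∀ t : ℂ, A t ∈ Complex.slitPlane →
      dK N n p (fun J K => Complex.log (lszZ N E Et lam J K)) (0 + t • eMat N p n) 0
        = B t / A t := by
    intro t ht
    have hexp : Continuous fun Φ : Fin N → Fin N → ℂ =>
        w Φ * Complex.exp (t * ((N : ℂ) * (starRingEnd ℂ) (Φ p n))) :=
      hw.mul (Complex.continuous_exp.comp (continuous_const.mul hφc))
    have hK := hasDerivAt_integral_mul_cexp (s := 0) (ε := 1) (μ := volume)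
      hexp.aestronglyMeasurable hφ.aestronglyMeasurable
      (by
        have hc : Continuous fun Φ : Fin N → Fin N → ℂ =>
            ‖w Φ * Complex.exp (t * ((N : ℂ) * (starRingEnd ℂ) (Φ p n)))‖ *
            Real.exp (1 * ‖(N : ℂ) * Φ p n‖) := by fun_prop
        refine (hI ((‖t‖ + 1) * N)).mono' hc.aestronglyMeasurable
          (Filter.Eventually.of_forall fun Φ => ?_)
        rw [Real.norm_of_nonneg (by positivity), norm_mul, mul_assoc]
        have h1 := Complex.norm_exp_le_exp_norm (t * ((N : ℂ) * (starRingEnd ℂ) (Φ p n)))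
        simp only [norm_mul, Complex.norm_natCast, Complex.norm_conj, one_mul] at h1 ⊢
        have h2 : (‖t‖ + 1) * (N : ℝ) * ‖Φ p n‖ = ‖t‖ * (N * ‖Φ p n‖) + N * ‖Φ p n‖ := by ring
        rw [h2, Real.exp_add]
        gcongr) (by simp)
    have hZ : (fun s : ℂ => lszZ N E Et lam (0 + t • eMat N p n) (0 + s • eMat N n p))
        = fun s : ℂ => ∫ Φ : Fin N → Fin N → ℂ,
          w Φ * Complex.exp (t * ((N : ℂ) * (starRingEnd ℂ) (Φ p n)))
            * Complex.exp (s * ((N : ℂ) * Φ p n)) := by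
      funext s
      simp only [lszZ, lszIntegrand_sources, hw_def]
    have hZ0 : lszZ N E Et lam (0 + t • eMat N p n) (0 + (0 : ℂ) • eMat N n p) = A t := by
      rw [congrFun hZ 0]
      simp [hA_def]
    rw [← hZ] at hK
    have hlog := hK.clog (by rw [hZ0]; exact ht)
    rw [dK, hlog.deriv, hZ0]
    congr 1
    refine integral_congr_ae (Filter.Eventually.of_forall fun Φ => ?_)
    simp only [zero_mul, Complex.exp_zero, mul_one]
    ring
  have hev : (fun t : ℂ =>
      dK N n p (fun J K => Complex.log (lszZ N E Et lam J K)) (0 + t • eMat N p n) 0)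
      =ᶠ[nhds 0] fun t => B t / A t := by
    have := hA.continuousAt.eventually (Complex.isOpen_slitPlane.mem_nhds hslit)
    filter_upwards [this] with t ht using hinner t ht
  have hne : A 0 ≠ 0 := Complex.slitPlane_ne_zero hslit
  rw [dJ, hev.deriv_eq, (hB.fun_div hA hne).deriv, hB0, zero_mul, sub_zero, hA0, sq (∫ Φ, w Φ),
    mul_div_mul_right _ _ (hA0 ▸ hne)]
  congr 1
  refine integral_congr_ae (Filter.Eventually.of_forall fun Φ => ?_)
  simp only [zero_mul, Complex.exp_zero, mul_one, Complex.ofReal_pow, ← Complex.mul_conj']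
  ring

/-- The correlator `Ω_p` is created from the free energy by the boundary
creation operator: `−∂/∂E_p[log Z(0,0)] = (1/N)·Σ_n ∂²(log Z)/∂J_{pn}∂K_{np}(0,0)`, i.e.
`Ω_p := (1/N²)·Σ_n ∂²(log Z)/∂J_{pn}∂K_{np}(0,0) = −(1/N)·∂ log Z(0,0)/∂E_p`. -/
theorem lsz_omega_boundary_creation
    (N : ℕ) (hN : 1 ≤ N) (E Et : Fin N → ℝ)
    (hE : ∀ n, 0 < E n) (hEt : ∀ n, 0 < Et n) (lam : ℝ) (hlam : 0 ≤ lam)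
    (p : Fin N) :
    (-(deriv (fun s : ℝ => Complex.log (lszZ N (Function.update E p s) Et lam 0 0)) (E p))
      = (1 / (N : ℂ)) *
        ∑ n, dJ N p n (dK N n p (fun J K => Complex.log (lszZ N E Et lam J K))) 0 0) ∧
    ((1 / (N : ℂ) ^ 2) *
        ∑ n, dJ N p n (dK N n p (fun J K => Complex.log (lszZ N E Et lam J K))) 0 0
      = -((1 / (N : ℂ)) *
        deriv (fun s : ℝ => Complex.log (lszZ N (Function.update E p s) Et lam 0 0)) (E p))) := by
  have hN0 : (N : ℂ) ≠ 0 := by exact_mod_cast (by omega : N ≠ 0)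
  have hint : ∀ n, Integrable fun Φ : Fin N → Fin N → ℂ =>
      lszWeight N E Et lam Φ * ((N : ℂ) ^ 2 * ((‖Φ p n‖ ^ 2 : ℝ) : ℂ)) := by
    intro n
    have hw := continuous_lszWeight N E Et lam
    have hc : Continuous fun Φ : Fin N → Fin N → ℂ =>
        lszWeight N E Et lam Φ * ((N : ℂ) ^ 2 * ((‖Φ p n‖ ^ 2 : ℝ) : ℂ)) := by fun_prop
    refine (integrable_lszWeight_exp N hN E Et hE hEt lam hlam p n (2 * N)).mono'
      hc.aestronglyMeasurable (Filter.Eventually.of_forall fun Φ => ?_)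
    have h1 : (N : ℝ) * ‖Φ p n‖ ≤ Real.exp (N * ‖Φ p n‖) := by
      linarith [Real.add_one_le_exp ((N : ℝ) * ‖Φ p n‖)]
    have h2 : 2 * (N : ℝ) * ‖Φ p n‖ = N * ‖Φ p n‖ + N * ‖Φ p n‖ := by ring
    rw [norm_mul, h2, Real.exp_add]
    gcongr
    calc ‖(N : ℂ) ^ 2 * ((‖Φ p n‖ ^ 2 : ℝ) : ℂ)‖
        = ((N : ℝ) * ‖Φ p n‖) * (N * ‖Φ p n‖) := by simp; ring
      _ ≤ _ := by gcongr
  have hsum : ∑ n, dJ N p n (dK N n p (fun J K => Complex.log (lszZ N E Et lam J K))) 0 0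
      = -((N : ℂ) *
        deriv (fun s : ℝ => Complex.log (lszZ N (Function.update E p s) Et lam 0 0)) (E p)) := by
    simp only [dJ_dK_log_lszZ N hN E Et hE hEt lam hlam]
    rw [deriv_log_lszZ_E N hN E Et hE hEt lam hlam, ← Finset.sum_div,
      ← integral_finsetSum _ fun n _ => hint n, ← mul_div_assoc, ← neg_div, ← integral_const_mul,
      ← integral_neg]
    congr 1
    refine integral_congr_ae (Filter.Eventually.of_forall fun Φ => ?_)
    simp only [← Finset.mul_sum]
    ring
  rw [hsum]
  constructor
  · field_simp
  · field_simp
end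

section
/- Let c, ε̃ ∈ ℂ, let b_1, b_2 ∈ ℂ satisfy b_1 + b_2 = 2ε̃ and (b_1 − b_2)² = −16c, and define x(z) := z − c/(z−ε̃) for z ≠ ε̃. Let ε ∈ ℂ with ε ≠ ε̃ and (ε−ε̃)² + c ≠ 0 (so that x'(ε) = 1 + c/(ε−ε̃)² ≠ 0), and set e := x(ε). Then (e−b_1)(e−b_2) = x'(ε)²·(ε̃−ε)² ≠ 0, and for every z ∈ ℂ \ {ε, ε̃}: ( 2(x(z)−e)/(x'(ε)(z−ε)) − (x(z)−e)/(x'(ε)(ε̃−ε)) − 1 )² = (x(z)−b_1)(x(z)−b_2) / ((e−b_1)(e−b_2)). -/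
/-!
Put `u = z - ε̃` and `w = ε - ε̃`. Since `b₁, b₂ = ε̃ ± 2√(-c)`, completing the square gives
`(x(z) - b₁)(x(z) - b₂) = (u - c/u)² + 4c = (u + c/u)² = (x'(z) u)²` (`xCoord_branch_product`).
On the other side `x(z) - e = (u - w)(1 + c/(uw))`, so the expression being squared collapses to
`(u + c/u) / (w + c/w)` (`bracket_eq`), and squaring it gives the ratio of branch products.
-/

/-- The spectral-curve coordinate `x(z) = z − c/(z−ε̃)` of the one-cut LSZ model. -/
noncomputable def xCoord (c εt z : ℂ) : ℂ := z - c / (z - εt)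

/-- Its derivative `x'(z) = 1 + c/(z−ε̃)²`. -/
noncomputable def xCoordDeriv (c εt z : ℂ) : ℂ := 1 + c / (z - εt) ^ 2

/-- The branch product is a perfect square on the spectral curve: the double cover
`√((x-b₁)(x-b₂))` is uniformised by `z`. -/
lemma xCoord_branch_product {c εt b₁ b₂ : ℂ} (h1 : b₁ + b₂ = 2 * εt)
    (h2 : (b₁ - b₂) ^ 2 = -16 * c) {z : ℂ} (hz : z ≠ εt) :
    (xCoord c εt z - b₁) * (xCoord c εt z - b₂) = (xCoordDeriv c εt z * (z - εt)) ^ 2 := by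
  have hu : z - εt ≠ 0 := sub_ne_zero.mpr hz
  have complete_square : (xCoord c εt z - b₁) * (xCoord c εt z - b₂)
      = (xCoord c εt z - εt) ^ 2 + 4 * c := by
    linear_combination (-xCoord c εt z + (b₁ + b₂ + 2 * εt) / 4) * h1 - h2 / 4
  rw [complete_square]
  unfold xCoord xCoordDeriv
  field_simp
  ring

lemma xCoordDeriv_ne_zero {c εt ε : ℂ} (hε : ε ≠ εt) (hx' : (ε - εt) ^ 2 + c ≠ 0) :
    xCoordDeriv c εt ε ≠ 0 := by
  have hw : ε - εt ≠ 0 := sub_ne_zero.mpr hε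
  have h : xCoordDeriv c εt ε = ((ε - εt) ^ 2 + c) / (ε - εt) ^ 2 := by
    unfold xCoordDeriv
    field_simp
  rw [h]
  exact div_ne_zero hx' (pow_ne_zero 2 hw)

/-- The quantity squared in the identity, as a ratio of the square roots `x'(z)(z - ε̃)` of the
branch products at `z` and at `ε`. -/
lemma bracket_eq {c εt ε z : ℂ} (hε : ε ≠ εt) (hx' : (ε - εt) ^ 2 + c ≠ 0)
    (hzε : z ≠ ε) (hz : z ≠ εt) :
    2 * (xCoord c εt z - xCoord c εt ε) / (xCoordDeriv c εt ε * (z - ε))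
        - (xCoord c εt z - xCoord c εt ε) / (xCoordDeriv c εt ε * (εt - ε)) - 1
      = xCoordDeriv c εt z * (z - εt) / (xCoordDeriv c εt ε * (ε - εt)) := by
  have hw : ε - εt ≠ 0 := sub_ne_zero.mpr hε
  have hw' : εt - ε ≠ 0 := sub_ne_zero.mpr hε.symm
  have hu : z - εt ≠ 0 := sub_ne_zero.mpr hz
  have hzw : z - ε ≠ 0 := sub_ne_zero.mpr hzε
  have hD := xCoordDeriv_ne_zero hε hx'
  have factor : xCoord c εt z - xCoord c εt ε
      = (z - ε) * (1 + c / ((z - εt) * (ε - εt))) := by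
    unfold xCoord
    field_simp
    ring
  have cancel : 2 * ((z - ε) * (1 + c / ((z - εt) * (ε - εt)))) / (xCoordDeriv c εt ε * (z - ε))
      = 2 * (1 + c / ((z - εt) * (ε - εt))) * (ε - εt) / (xCoordDeriv c εt ε * (ε - εt)) := by
    field_simp
  have flip : xCoordDeriv c εt ε * (εt - ε) = -(xCoordDeriv c εt ε * (ε - εt)) := by ring
  have hDw : xCoordDeriv c εt ε * (ε - εt) ≠ 0 := mul_ne_zero hD hw
  rw [factor, cancel, flip, div_neg, sub_neg_eq_add, ← add_div, div_sub_one hDw]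
  congr 1
  unfold xCoordDeriv
  field_simp
  ring

/-- One-cut identity of the LSZ model: with `b₁ + b₂ = 2ε̃`,
`(b₁−b₂)² = −16c`, `ε ≠ ε̃`, `(ε−ε̃)² + c ≠ 0` and `e := x(ε)`, one has
`(e−b₁)(e−b₂) = x'(ε)²(ε̃−ε)² ≠ 0`, and for all `z ∉ {ε, ε̃}`:
`(2(x(z)−e)/(x'(ε)(z−ε)) − (x(z)−e)/(x'(ε)(ε̃−ε)) − 1)²
  = (x(z)−b₁)(x(z)−b₂)/((e−b₁)(e−b₂))`. -/
theorem lsz_one_cut_eigenvalue_identity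
    (c εt ε b₁ b₂ : ℂ) (h1 : b₁ + b₂ = 2 * εt) (h2 : (b₁ - b₂) ^ 2 = -16 * c)
    (hε : ε ≠ εt) (hx' : (ε - εt) ^ 2 + c ≠ 0) :
    ((xCoord c εt ε - b₁) * (xCoord c εt ε - b₂)
        = xCoordDeriv c εt ε ^ 2 * (εt - ε) ^ 2) ∧
    ((xCoord c εt ε - b₁) * (xCoord c εt ε - b₂) ≠ 0) ∧
    (∀ z : ℂ, z ≠ ε → z ≠ εt →
      (2 * (xCoord c εt z - xCoord c εt ε) / (xCoordDeriv c εt ε * (z - ε))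
        - (xCoord c εt z - xCoord c εt ε) / (xCoordDeriv c εt ε * (εt - ε)) - 1) ^ 2
      = (xCoord c εt z - b₁) * (xCoord c εt z - b₂) /
          ((xCoord c εt ε - b₁) * (xCoord c εt ε - b₂))) := by
  have he := xCoord_branch_product h1 h2 hε
  have hDw : xCoordDeriv c εt ε * (ε - εt) ≠ 0 :=
    mul_ne_zero (xCoordDeriv_ne_zero hε hx') (sub_ne_zero.mpr hε)
  refine ⟨by rw [he]; ring, by rw [he]; exact pow_ne_zero 2 hDw, fun z hzε hz => ?_⟩
  rw [bracket_eq hε hx' hzε hz, he, xCoord_branch_product h1 h2 hz, div_pow]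
end

section
/- Let e, ẽ, λ, N be positive real numbers, and set D := √((e+ẽ)² + 12λ), ε := (5e − ẽ + D)/6, ε̃ := (e − 5ẽ − D)/6, and ρ := ρ̃ := N·(−(e+ẽ)² + 12λ + (e+ẽ)·D)/(18λ). Then ε − ε̃ = (2(e+ẽ) + D)/3 > 0 and ρ > 0, and these values solve the system: e = ε − λρ̃/(N(ε−ε̃)), ẽ = −ε̃ − λρ/(N(ε−ε̃)), and N/ρ̃ − λρ/(N(ε−ε̃)²) = N/ρ − λρ̃/(N(ε−ε̃)²). Moreover ε + ε̃ = e − ẽ, and as λ → 0⁺ (with e, ẽ fixed) one has ε → e and ε̃ → −ẽ. -/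
/-!
Write `s = e + ẽ` and `D² = s² + 12λ`. The numerator of `ρ` factors as
`-s² + 12λ + sD = (D - s)(D + 2s)`, while `ε - ε̃ = (D + 2s)/3`. Since `D > s > 0`, both are
positive, and `λρ / (N(ε - ε̃)) = (D - s)/6` (`lsz_shift`), which makes the first two equations
of the system linear identities. The third is trivial because `ρ = ρ̃`. The limits follow from
continuity of `D` at `λ = 0`, where `D = s`.
-/

/-- `D(λ) := √((e+ẽ)² + 12λ)` in the combinatorial limit of the LSZ model. -/
noncomputable def lszD (e et lam : ℝ) : ℝ := Real.sqrt ((e + et) ^ 2 + 12 * lam)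

/-- `ε(λ) := (5e − ẽ + D)/6`. -/
noncomputable def lszEps (e et lam : ℝ) : ℝ := (5 * e - et + lszD e et lam) / 6

/-- `ε̃(λ) := (e − 5ẽ − D)/6`. -/
noncomputable def lszEpsT (e et lam : ℝ) : ℝ := (e - 5 * et - lszD e et lam) / 6

/-- `ρ(λ) = ρ̃(λ) := N·(−(e+ẽ)² + 12λ + (e+ẽ)·D)/(18λ)`. -/
noncomputable def lszRho (Nr e et lam : ℝ) : ℝ :=
  Nr * (-(e + et) ^ 2 + 12 * lam + (e + et) * lszD e et lam) / (18 * lam)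

theorem lsz_lt_D {e et lam : ℝ} (hlam : 0 < lam) : e + et < lszD e et lam :=
  Real.lt_sqrt_of_sq_lt (by linarith)

theorem lsz_D_sq {e et lam : ℝ} (hlam : 0 < lam) :
    lszD e et lam ^ 2 = (e + et) ^ 2 + 12 * lam :=
  Real.sq_sqrt (by positivity)

theorem lsz_eps_sub (e et lam : ℝ) :
    lszEps e et lam - lszEpsT e et lam = (2 * (e + et) + lszD e et lam) / 3 := by
  unfold lszEps lszEpsT; ring

theorem lsz_rho_factor {e et lam : ℝ} (Nr : ℝ) (hlam : 0 < lam) :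
    lszRho Nr e et lam =
      Nr * ((lszD e et lam - (e + et)) * (2 * (e + et) + lszD e et lam)) / (18 * lam) := by
  unfold lszRho
  congr 2
  linear_combination -lsz_D_sq (e := e) (et := et) hlam

/-- The common correction term by which `ε` and `-ε̃` differ from `e` and `ẽ`. -/
theorem lsz_shift {e et Nr lam : ℝ} (he : 0 < e) (het : 0 < et) (hN : 0 < Nr) (hlam : 0 < lam) :
    lam * lszRho Nr e et lam / (Nr * (lszEps e et lam - lszEpsT e et lam)) =
      (lszD e et lam - (e + et)) / 6 := by
  have hD := lsz_lt_D (e := e) (et := et) hlam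
  have hpos : 2 * (e + et) + lszD e et lam ≠ 0 := by linarith
  rw [lsz_eps_sub, lsz_rho_factor Nr hlam]
  generalize 2 * (e + et) + lszD e et lam = t at hpos ⊢
  field_simp
  ring

theorem lsz_tendsto_D {e et : ℝ} (he : 0 < e) (het : 0 < et) :
    Filter.Tendsto (fun lam : ℝ => lszD e et lam)
      (nhdsWithin 0 (Set.Ioi 0)) (nhds (e + et)) := by
  have hc : Continuous fun lam : ℝ => lszD e et lam := by unfold lszD; fun_prop
  have h0 : lszD e et 0 = e + et := by
    rw [lszD, mul_zero, add_zero, Real.sqrt_sq (by positivity)]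
  have h := hc.tendsto 0
  rw [h0] at h
  exact h.mono_left nhdsWithin_le_nhds

/-- Exact solution of the spectral curve data of the LSZ model in the
combinatorial limit: for `e, ẽ, λ, N > 0` the values `ε, ε̃, ρ = ρ̃` defined above satisfy
`ε − ε̃ = (2(e+ẽ) + D)/3 > 0`, `ρ > 0`, solve the system
`e = ε − λρ̃/(N(ε−ε̃))`, `ẽ = −ε̃ − λρ/(N(ε−ε̃))`,
`N/ρ̃ − λρ/(N(ε−ε̃)²) = N/ρ − λρ̃/(N(ε−ε̃)²)`, satisfy `ε + ε̃ = e − ẽ`, and as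
`λ → 0⁺` one has `ε → e` and `ε̃ → −ẽ`. -/
theorem lsz_combinatorial_limit_solution
    (e et Nr : ℝ) (he : 0 < e) (het : 0 < et) (hN : 0 < Nr) :
    (∀ lam : ℝ, 0 < lam →
      (lszEps e et lam - lszEpsT e et lam = (2 * (e + et) + lszD e et lam) / 3) ∧
      (0 < lszEps e et lam - lszEpsT e et lam) ∧
      (0 < lszRho Nr e et lam) ∧
      (e = lszEps e et lam -
        lam * lszRho Nr e et lam / (Nr * (lszEps e et lam - lszEpsT e et lam))) ∧
      (et = -lszEpsT e et lam -
        lam * lszRho Nr e et lam / (Nr * (lszEps e et lam - lszEpsT e et lam))) ∧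
      (Nr / lszRho Nr e et lam -
          lam * lszRho Nr e et lam / (Nr * (lszEps e et lam - lszEpsT e et lam) ^ 2)
        = Nr / lszRho Nr e et lam -
          lam * lszRho Nr e et lam / (Nr * (lszEps e et lam - lszEpsT e et lam) ^ 2)) ∧
      (lszEps e et lam + lszEpsT e et lam = e - et)) ∧
    Filter.Tendsto (fun lam : ℝ => lszEps e et lam)
      (nhdsWithin 0 (Set.Ioi 0)) (nhds e) ∧
    Filter.Tendsto (fun lam : ℝ => lszEpsT e et lam)
      (nhdsWithin 0 (Set.Ioi 0)) (nhds (-et)) := by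
  refine ⟨fun lam hlam => ?_, ?_, ?_⟩
  · have hD := lsz_lt_D (e := e) (et := et) hlam
    have hsub := lsz_eps_sub e et lam
    have hshift := lsz_shift he het hN hlam
    refine ⟨hsub, by linarith, ?_, ?_, ?_, rfl, ?_⟩
    · rw [lsz_rho_factor Nr hlam]
      have h1 : 0 < lszD e et lam - (e + et) := by linarith
      have h2 : 0 < 2 * (e + et) + lszD e et lam := by linarith
      positivity
    · rw [hshift]; unfold lszEps; ring
    · rw [hshift]; unfold lszEpsT; ring
    · unfold lszEps lszEpsT; ring
  · have h := ((lsz_tendsto_D he het).const_add (5 * e - et)).div_const 6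
    rwa [show (5 * e - et + (e + et)) / 6 = e by ring] at h
  · have h := ((lsz_tendsto_D he het).const_sub (e - 5 * et)).div_const 6
    rwa [show (e - 5 * et - (e + et)) / 6 = -et by ring] at h
end
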